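/- arXiv:2310.14742 — 2 statements merged into one kernel-verified Lean document; each statement's English description precedes it below -/
import Mathlib

section
/- Let d ≥ 3 and let D ⊂ ℝ^d be a bounded strongly minimally convex domain. Then there exist ε ∈ (0,1) and A ≥ 1 such that for all x ∈ N_ε(∂D) ∩ D and all v ∈ ℝ^d: A^{-1}(‖v_N‖/(2δ_D(x)) + ‖v_T‖/δ_D(x)^{1/2}) ≤ g_D(x,v) ≤ A(‖v_N‖/(2δ_D(x)) + ‖v_T‖/δ_D(x)^{1/2}). -/
/-!
Near a boundary point `p` nearest to `x`, with `δ = dist x p` and outer normal `n`, the defining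
function satisfies `u (p + y) = c ⟪n, y⟫ + O(‖y‖ ^ 2)` with `c = ‖du_p‖` bounded above and below,
uniformly in `p` (`UniformBounds`, `exists_uniformBounds`, `fderiv_eq_normal`).

Upper bound. As `d ≥ 3` there is `w` orthogonal to `v` and `n` with `‖w‖ = ‖v‖`. The affine disc
`x + z₀ r v + z₁ r w` is conformal harmonic, moves by at most `r ‖v_N‖` in the normal direction and
by at most `r ‖v‖` in total, so it lies in `D` when `r (‖v_N‖ / (2 δ) + ‖v_T‖ / √δ)` is below a
uniform constant (`UniformBounds.exists_disc`).

Lower bound. For a conformal harmonic disc `f` centred at `x`, the Laplacian of `u ∘ f` is the trace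
of the Hessian of `u` on the tangent plane of `f` (`CHDisk.laplacian_comp`). Hence
`u ∘ f - (κ / 2) ‖f - x‖ ^ 2` is subharmonic for a uniform `κ > 0`, on a subdisc of uniform radius
`s` where `f` stays close to `p` (`CHDisk.norm_sub_le`, a form of Borel–Carathéodory). Adding a
harmonic function which equals a multiple of `re z * ⟪m, f - x⟫` on `‖z‖ = s`
(`exists_harmonic_multiplier`) and using the maximum principle gives two derivative estimates at the
centre:
* `‖f_x(0)‖ = O(√δ)`, taking `m` in the direction of `f_x(0)` and completing the square
  (`CHDisk.norm_fderiv_le`);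
* `⟪n, f_x(0)⟫ = O(δ)`, taking `m = n` and using that `⟪n, f - x⟫ ≤ a + b ‖f - x‖ ^ 2` with
  `a = O(δ)`, since `f` takes values in `D` (`CHDisk.abs_inner_fderiv_le`).
-/

open scoped RealInnerProductSpace ENNReal
open Metric Set Filter

noncomputable section

/-- Euclidean space `ℝ^d`. -/
abbrev Euc (d : ℕ) := EuclideanSpace ℝ (Fin d)

/-- The open unit disk in `ℝ²`. -/
def unitDisk : Set (Euc 2) := Metric.ball 0 1

/-- Partial derivative of `f` at `z` in the `i`-th coordinate direction. -/
def pd {d : ℕ} (i : Fin 2) (f : Euc 2 → Euc d) (z : Euc 2) : Euc d :=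
  fderiv ℝ f z (EuclideanSpace.single i 1)

/-- `f` is a conformal harmonic map on the unit disk: it is `C²`, its (vector)
Laplacian vanishes (equivalently, every component is harmonic), and at each point
its two partial derivatives are orthogonal and of equal norm. -/
def ConformalHarmonicOnDisk {d : ℕ} (f : Euc 2 → Euc d) : Prop :=
  ContDiffOn ℝ 2 f unitDisk ∧
  (∀ z ∈ unitDisk,
    fderiv ℝ (pd 0 f) z (EuclideanSpace.single 0 1)
      + fderiv ℝ (pd 1 f) z (EuclideanSpace.single 1 1) = 0) ∧
  (∀ z ∈ unitDisk, ‖pd 0 f z‖ = ‖pd 1 f z‖ ∧ ⟪pd 0 f z, pd 1 f z⟫ = 0)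

/-- The minimal (Forstnerič–Kalaj) metric of a domain `D ⊆ ℝ^d`:
`g_D(x,v) = inf {1/r : r > 0, f ∈ CH(𝔻, D), f 0 = x, f_x 0 = r • v}`. -/
def minMetric {d : ℕ} (D : Set (Euc d)) (x v : Euc d) : ℝ :=
  sInf {c : ℝ | ∃ r : ℝ, 0 < r ∧ c = 1 / r ∧
    ∃ f : Euc 2 → Euc d, ConformalHarmonicOnDisk f ∧ (∀ z ∈ unitDisk, f z ∈ D) ∧
      f 0 = x ∧ pd 0 f 0 = r • v}

/-- `γ` is a piecewise `C¹` curve on `[a, b]`. -/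
def PiecewiseC1On {d : ℕ} (γ : ℝ → Euc d) (a b : ℝ) : Prop :=
  ContinuousOn γ (Set.Icc a b) ∧
  ∃ (n : ℕ) (t : Fin (n + 2) → ℝ), Monotone t ∧ t 0 = a ∧ t (Fin.last (n + 1)) = b ∧
    ∀ i : Fin (n + 1), ContDiffOn ℝ 1 γ (Set.Icc (t i.castSucc) (t i.succ))

/-- The minimal pseudodistance `ρ_D`: infimum of minimal lengths of piecewise `C¹`
curves in `D` joining `x` to `y`. -/
def minDist {d : ℕ} (D : Set (Euc d)) (x y : Euc d) : ℝ :=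
  sInf {L : ℝ | ∃ γ : ℝ → Euc d, PiecewiseC1On γ 0 1 ∧
    (∀ t ∈ Set.Icc (0:ℝ) 1, γ t ∈ D) ∧ γ 0 = x ∧ γ 1 = y ∧
    L = ∫ t in (0:ℝ)..(1:ℝ), minMetric D (γ t) (deriv γ t)}

/-- The Gromov product `(x|y)_o` with respect to the minimal pseudodistance of `D`. -/
def gromovProd {d : ℕ} (D : Set (Euc d)) (o x y : Euc d) : ℝ :=
  (minDist D x o + minDist D y o - minDist D x y) / 2

/-- `D` is hyperbolic: the minimal pseudodistance is a genuine distance. -/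
def MinHyperbolic {d : ℕ} (D : Set (Euc d)) : Prop :=
  ∀ x ∈ D, ∀ y ∈ D, x ≠ y → 0 < minDist D x y

/-- The Hessian quadratic form of `u` at `x` in direction `v`. -/
def hessQ {d : ℕ} (u : Euc d → ℝ) (x v : Euc d) : ℝ :=
  fderiv ℝ (fun y => fderiv ℝ u y v) x v

/-- `D` is a bounded domain with `C²` boundary, described by a `C²` defining
function `u` on a neighborhood `U` of `∂D` with nonvanishing differential. -/
def IsC2BoundedDomain {d : ℕ} (D : Set (Euc d)) : Prop :=
  IsOpen D ∧ IsConnected D ∧ Bornology.IsBounded D ∧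
  ∃ (U : Set (Euc d)) (u : Euc d → ℝ), IsOpen U ∧ frontier D ⊆ U ∧ ContDiffOn ℝ 2 u U ∧
    D ∩ U = {x | x ∈ U ∧ u x < 0} ∧ frontier D = {x | x ∈ U ∧ u x = 0} ∧
    ∀ x ∈ frontier D, fderiv ℝ u x ≠ 0

/-- `D` is a bounded strongly minimally convex domain: it has a `C²` defining function
which is strongly minimally plurisubharmonic near `∂D`, i.e. the trace of its Hessian
on every 2-plane (spanned by an orthonormal pair `v, w`) is strictly positive. -/
def IsStronglyMinimallyConvex {d : ℕ} (D : Set (Euc d)) : Prop :=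
  IsOpen D ∧ IsConnected D ∧ Bornology.IsBounded D ∧
  ∃ (U : Set (Euc d)) (u : Euc d → ℝ), IsOpen U ∧ frontier D ⊆ U ∧ ContDiffOn ℝ 2 u U ∧
    D ∩ U = {x | x ∈ U ∧ u x < 0} ∧ frontier D = {x | x ∈ U ∧ u x = 0} ∧
    (∀ x ∈ frontier D, fderiv ℝ u x ≠ 0) ∧
    (∀ x ∈ U, ∀ v w : Euc d, ‖v‖ = 1 → ‖w‖ = 1 → ⟪v, w⟫ = 0 →
      0 < hessQ u x v + hessQ u x w)

/-- `D` is a bounded strongly convex domain: convex, with a `C²` defining function whose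
Hessian is positive definite on the tangent space at every boundary point
(equivalently, all principal curvatures of `∂D` w.r.t. the inner normal are positive). -/
def IsStronglyConvexDomain {d : ℕ} (D : Set (Euc d)) : Prop :=
  IsOpen D ∧ IsConnected D ∧ Bornology.IsBounded D ∧ Convex ℝ D ∧
  ∃ (U : Set (Euc d)) (u : Euc d → ℝ), IsOpen U ∧ frontier D ⊆ U ∧ ContDiffOn ℝ 2 u U ∧
    D ∩ U = {x | x ∈ U ∧ u x < 0} ∧ frontier D = {x | x ∈ U ∧ u x = 0} ∧
    (∀ x ∈ frontier D, fderiv ℝ u x ≠ 0) ∧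
    (∀ ξ ∈ frontier D, ∀ w : Euc d, w ≠ 0 → fderiv ℝ u ξ w = 0 → 0 < hessQ u ξ w)

/-- For `x ∈ D` with nearest boundary point `p`, the outer unit normal direction
`n_{π(x)} = (p - x)/‖p - x‖`. -/
def nvec {d : ℕ} (x p : Euc d) : Euc d := ‖p - x‖⁻¹ • (p - x)

/-- Normal component of `v` at `x` with nearest boundary point `p`. -/
def vN {d : ℕ} (x p v : Euc d) : Euc d := ⟪v, nvec x p⟫ • nvec x p

/-- Tangential component of `v` at `x` with nearest boundary point `p`. -/
def vT {d : ℕ} (x p v : Euc d) : Euc d := v - vN x p v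

/-- The intrinsic distance `H` on the boundary `∂D`: infimum of Euclidean lengths of
piecewise `C¹` curves in `∂D` joining two boundary points. -/
def bdist {d : ℕ} (D : Set (Euc d)) (ξ η : Euc d) : ℝ :=
  sInf {L : ℝ | ∃ α : ℝ → Euc d, PiecewiseC1On α 0 1 ∧
    (∀ t ∈ Set.Icc (0:ℝ) 1, α t ∈ frontier D) ∧ α 0 = ξ ∧ α 1 = η ∧
    L = ∫ t in (0:ℝ)..(1:ℝ), ‖deriv α t‖}

/-- `h(x) = δ_D(x)^{1/2}`. -/
def hfun {d : ℕ} (D : Set (Euc d)) (x : Euc d) : ℝ :=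
  Real.sqrt (Metric.infDist x (frontier D))

/-- The length of a curve with respect to the boundary Finsler metric
`F(x,v) = ‖v_N‖/(2 δ_D(x)) + ‖v_T‖/δ_D(x)^{1/2}`. -/
def Flen {d : ℕ} (D : Set (Euc d)) (π : Euc d → Euc d) (γ : ℝ → Euc d) : ℝ :=
  ∫ t in (0:ℝ)..(1:ℝ),
    (‖vN (γ t) (π (γ t)) (deriv γ t)‖ / (2 * Metric.infDist (γ t) (frontier D))
      + ‖vT (γ t) (π (γ t)) (deriv γ t)‖ / Real.sqrt (Metric.infDist (γ t) (frontier D)))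

/-- The filling Finsler metric `F`: the boundary Finsler metric on
`N = {δ_D ≤ ε}` and `c‖v‖` elsewhere. -/
def Fmet {d : ℕ} (D : Set (Euc d)) (π : Euc d → Euc d) (ε c : ℝ) (x v : Euc d) : ℝ :=
  if Metric.infDist x (frontier D) ≤ ε then
    ‖vN x (π x) v‖ / (2 * Metric.infDist x (frontier D))
      + ‖vT x (π x) v‖ / Real.sqrt (Metric.infDist x (frontier D))
  else c * ‖v‖

/-- The intrinsic distance `d_F` associated to the filling Finsler metric `F`. -/
def dF {d : ℕ} (D : Set (Euc d)) (π : Euc d → Euc d) (ε c : ℝ) (x y : Euc d) : ℝ :=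
  sInf {L : ℝ | ∃ γ : ℝ → Euc d, PiecewiseC1On γ 0 1 ∧
    (∀ t ∈ Set.Icc (0:ℝ) 1, γ t ∈ D) ∧ γ 0 = x ∧ γ 1 = y ∧
    L = ∫ t in (0:ℝ)..(1:ℝ), Fmet D π ε c (γ t) (deriv γ t)}

/-- The hyperbolic filling distance
`d_H(x,y) = 2 log((H(π x, π y) + h(x) ∨ h(y)) / √(h(x) h(y)))`. -/
def dH {d : ℕ} (D : Set (Euc d)) (π : Euc d → Euc d) (x y : Euc d) : ℝ :=
  2 * Real.log ((bdist D (π x) (π y) + max (hfun D x) (hfun D y)) /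
    Real.sqrt (hfun D x * hfun D y))

/-- `δ̂_D(x,v)`: the supremum over 2-dimensional linear subspaces `Λ ∋ v` of the
distance (in `ℝ≥0∞`, so `∞` if `x + Λ ⊆ D`) from `x` to `(x + Λ) \ D`. -/
def deltaHat {d : ℕ} (D : Set (Euc d)) (x v : Euc d) : ℝ≥0∞ :=
  ⨆ (Λ : Submodule ℝ (Euc d)) (_ : Module.finrank ℝ Λ = 2) (_ : v ∈ Λ),
    ⨅ (y : Euc d) (_ : y - x ∈ Λ ∧ y ∉ D), edist x y

/-- The positive parameter at which the ray `t ↦ x + t • v` exits the convex domain `D`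
(equal to `0`, by the `sInf ∅ = 0` convention, when the ray stays in `D`,
i.e. when the corresponding chord endpoint is the point at infinity). -/
def chordParam {d : ℕ} (D : Set (Euc d)) (x v : Euc d) : ℝ :=
  sInf {s : ℝ | 0 < s ∧ x + s • v ∉ D}

/-- The Hilbert Finsler metric `h_D(x,v) = (‖v‖/2)(1/‖x-a‖ + 1/‖x-b‖)` of a convex
domain, with the convention `1/‖x-∞‖ = 0` (here `‖x-b‖ = chordParam D x v • ‖v‖` and
`‖x-a‖ = chordParam D x (-v) • ‖v‖`, and division by zero is zero). -/
def hilbertFinsler {d : ℕ} (D : Set (Euc d)) (x v : Euc d) : ℝ :=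
  (1/2) * (1 / chordParam D x v + 1 / chordParam D x (-v))

/- The Hilbert distance of a convex domain: for `x ≠ y`,
`H_D(x,y) = ½ log((‖x-b‖ ‖y-a‖)/(‖x-a‖ ‖y-b‖))` where `a, x, y, b` are aligned on the
chord through `x, y`, with the convention that ratios involving the point at infinity
(detected by `chordParam = 0`) are equal to `1`. -/
open Classical in
def hilbertDist {d : ℕ} (D : Set (Euc d)) (x y : Euc d) : ℝ :=
  if x = y then 0 else
    (1/2) * Real.log
      ((if chordParam D x (y - x) = 0 then 1
        else chordParam D x (y - x) / (chordParam D x (y - x) - 1)) *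
       (if chordParam D x (x - y) = 0 then 1
        else (1 + chordParam D x (x - y)) / chordParam D x (x - y)))

section

open scoped Topology
open Laplacian

namespace MinMet

/-! ### Subharmonic and harmonic functions on the disc -/

theorem laplacian_eq (f : ℂ → ℝ) (z : ℂ) :
    Δ f z = fderiv ℝ (fderiv ℝ f) z 1 1 + fderiv ℝ (fderiv ℝ f) z Complex.I Complex.I := by
  rw [InnerProductSpace.laplacian_eq_iteratedFDeriv_complexPlane]
  simp [iteratedFDeriv_two_apply]

/-- Second derivative test: at a local maximum the Hessian is nonpositive in every direction. -/
theorem second_deriv_nonpos {f : ℂ → ℝ} {z : ℂ} (hf : ContDiffAt ℝ 2 f z) (hm : IsLocalMax f z)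
    (e : ℂ) : fderiv ℝ (fderiv ℝ f) z e e ≤ 0 := by
  by_contra! h
  set γ : ℝ → ℂ := fun t => z + t • e with hγ
  have hγd : ∀ t, HasDerivAt γ e t := fun t => by
    simpa [hγ] using (((hasDerivAt_id t).smul_const e).const_add z :)
  have hγ0 : γ 0 = z := by simp [hγ]
  have hγt : Tendsto γ (𝓝 0) (𝓝 z) := by
    have := (hγd 0).continuousAt.tendsto
    rwa [hγ0] at this
  have hd1 : ∀ᶠ y in 𝓝 z, DifferentiableAt ℝ f y := by
    filter_upwards [hf.eventually (by simp)] with y hy using hy.differentiableAt (by norm_num)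
  have hd : deriv (f ∘ γ) =ᶠ[𝓝 0] fun t => fderiv ℝ f (γ t) e := by
    filter_upwards [hγt.eventually hd1] with t ht
    exact (ht.hasFDerivAt.comp_hasDerivAt t (hγd t)).deriv
  have hdd : DifferentiableAt ℝ (fderiv ℝ f) z :=
    (hf.fderiv_right (m := 1) (by norm_num)).differentiableAt (by norm_num)
  have hd2 : deriv (deriv (f ∘ γ)) 0 = fderiv ℝ (fderiv ℝ f) z e e := by
    rw [hd.deriv_eq]
    have h1 : HasFDerivAt (fderiv ℝ f) (fderiv ℝ (fderiv ℝ f) z) (γ 0) := by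
      rw [hγ0]; exact hdd.hasFDerivAt
    have h2 := (h1.comp_hasDerivAt 0 (hγd 0)).clm_apply (hasDerivAt_const (0 : ℝ) e)
    simpa using h2.deriv
  have hmax : IsLocalMax (f ∘ γ) 0 := by
    have : IsLocalMax f (γ 0) := by rwa [hγ0]
    exact this.comp_continuous (hγd 0).continuousAt
  have hcont : ContinuousAt (f ∘ γ) 0 := by
    refine ContinuousAt.comp ?_ (hγd 0).continuousAt
    rw [hγ0]; exact hf.continuousAt
  have hmin := isLocalMin_of_deriv_deriv_pos (hd2 ▸ h) hmax.deriv_eq_zero hcont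
  have hc : f ∘ γ =ᶠ[𝓝 0] fun _ => (f ∘ γ) 0 := by
    filter_upwards [hmin, hmax] with t h1 h2 using le_antisymm h2 h1
  have : deriv (deriv (f ∘ γ)) 0 = 0 := by
    rw [hc.deriv.deriv_eq]; simp
  linarith

theorem contDiffAt_normSq (z : ℂ) : ContDiffAt ℝ 2 (fun w : ℂ => ‖w‖ ^ 2) z :=
  (contDiff_norm_sq ℝ).contDiffAt

theorem laplacian_normSq (z : ℂ) :
    Δ (fun w : ℂ => ‖w‖ ^ 2) z = 4 := by
  rw [laplacian_eq]
  have : fderiv ℝ (fun w : ℂ => ‖w‖ ^ 2) = ⇑((2 : ℝ) • innerSL ℝ : ℂ →L[ℝ] ℂ →L[ℝ] ℝ) := by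
    ext w v; simp; ring
  rw [this, ContinuousLinearMap.fderiv]
  change (2 : ℝ) * ⟪(1 : ℂ), 1⟫ + 2 * ⟪Complex.I, Complex.I⟫ = 4
  simp only [real_inner_self_eq_norm_sq]
  norm_num

/-- Maximum principle for `C²` subharmonic functions, at the centre of a disc. Adding a small
multiple of `‖w‖ ^ 2` makes the Laplacian positive, so the maximum cannot be interior. -/
theorem max_principle {Ψ : ℂ → ℝ} {s m : ℝ} (hs : 0 < s)
    (hΨ : ∀ z ∈ closedBall (0 : ℂ) s, ContDiffAt ℝ 2 Ψ z)
    (hΔ : ∀ z ∈ ball (0 : ℂ) s, 0 ≤ Δ Ψ z)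
    (hb : ∀ z : ℂ, ‖z‖ = s → Ψ z ≤ m) : Ψ 0 ≤ m := by
  by_contra! hlt
  set ε := (Ψ 0 - m) / (2 * s ^ 2) with hε
  have hεp : 0 < ε := by have := sub_pos.2 hlt; positivity
  set Φ : ℂ → ℝ := Ψ + ε • (fun w : ℂ => ‖w‖ ^ 2) with hΦ
  have hΦc : ∀ z ∈ closedBall (0 : ℂ) s, ContDiffAt ℝ 2 Φ z := fun z hz =>
    (hΨ z hz).add ((contDiffAt_normSq z).const_smul ε)
  obtain ⟨z₀, hz₀, hmax⟩ := (isCompact_closedBall (0 : ℂ) s).exists_isMaxOn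
    ⟨0, by simp [hs.le]⟩ (fun z hz => (hΦc z hz).continuousAt.continuousWithinAt)
  have h0 : Φ 0 ≤ Φ z₀ := hmax (by simp [hs.le])
  have hΦ0 : Φ 0 = Ψ 0 := by simp [hΦ]
  have hin : z₀ ∈ ball (0 : ℂ) s := by
    rw [mem_ball_zero_iff]
    refine lt_of_le_of_ne (mem_closedBall_zero_iff.1 hz₀) fun he => ?_
    have h1 := hb z₀ he
    have h2 : Φ z₀ = Ψ z₀ + (Ψ 0 - m) / 2 := by
      simp only [hΦ, Pi.add_apply, Pi.smul_apply, smul_eq_mul, he, hε]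
      field_simp
    linarith
  have hloc : IsLocalMax Φ z₀ := hmax.isLocalMax
    (mem_of_superset (isOpen_ball.mem_nhds hin) ball_subset_closedBall)
  have hn : Δ Φ z₀ ≤ 0 := by
    rw [laplacian_eq]
    have := second_deriv_nonpos (hΦc z₀ hz₀) hloc 1
    have := second_deriv_nonpos (hΦc z₀ hz₀) hloc Complex.I
    linarith
  have hsm : ContDiffAt ℝ 2 (ε • fun w : ℂ => ‖w‖ ^ 2) z₀ := (contDiffAt_normSq z₀).const_smul ε
  rw [hΦ, (hΨ z₀ hz₀).laplacian_add hsm,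
    InnerProductSpace.laplacian_smul _ (contDiffAt_normSq z₀), laplacian_normSq] at hn
  have := hΔ z₀ hin
  simp at hn
  linarith

/-- On the circle `‖z‖ = s` the product `re z * h z` of two harmonic functions agrees with a
harmonic function `K`, and `K 0` recovers the derivative of `h` at the centre. If `h = re G` with
`G` holomorphic and `G 0 = 0`, then `K = re ((z G(z) + s² G(z) / z) / 2)`, because
`s² / z = conj z` on the circle. -/
theorem exists_harmonic_multiplier {h : ℂ → ℝ} {s : ℝ} (hs : 0 < s)
    (hh : InnerProductSpace.HarmonicOnNhd h (ball 0 1)) (h0 : h 0 = 0) :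
    ∃ K : ℂ → ℝ, InnerProductSpace.HarmonicOnNhd K (ball 0 1) ∧
      (∀ z ∈ ball (0 : ℂ) 1, ‖z‖ = s → K z = z.re * h z) ∧ K 0 = s ^ 2 / 2 * fderiv ℝ h 0 1 := by
  obtain ⟨F, hF, hFh⟩ := hh.exists_analyticOnNhd_ball_re_eq
  set G : ℂ → ℂ := fun z => F z - F 0 with hG
  have hGd : DifferentiableOn ℂ G (ball 0 1) := hF.differentiableOn.sub_const _
  have hGre : ∀ z ∈ ball (0 : ℂ) 1, (G z).re = h z := fun z hz => by
    have h1 := hFh hz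
    have h2 := hFh (mem_ball_self (x := (0 : ℂ)) one_pos)
    simp only at h1 h2
    simp [hG, h1, h2, h0]
  have hnb : ball (0 : ℂ) 1 ∈ 𝓝 (0 : ℂ) := ball_mem_nhds _ one_pos
  set L : ℂ → ℂ := fun z => (1 / 2 : ℂ) * (z * G z + (s : ℂ) ^ 2 * dslope G 0 z) with hL
  have hsl : DifferentiableOn ℂ (dslope G 0) (ball 0 1) :=
    (Complex.differentiableOn_dslope hnb).2 hGd
  have hLd : DifferentiableOn ℂ L (ball 0 1) := by
    apply DifferentiableOn.const_mul
    exact (differentiableOn_id.mul hGd).add (hsl.const_mul _)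
  refine ⟨fun z => (L z).re, ?_, ?_, ?_⟩
  · intro z hz
    exact (hLd.analyticAt (isOpen_ball.mem_nhds hz)).harmonicAt_re
  · intro z hz hzs
    have hz0 : z ≠ 0 := by rintro rfl; simp at hzs; linarith
    have h1 : (s : ℂ) ^ 2 * dslope G 0 z = (starRingEnd ℂ) z * G z := by
      rw [dslope_of_ne _ hz0, slope_def_field, ← hzs, ← Complex.mul_conj']
      simp [hG]; field_simp
    have h2 := hGre z hz
    simp only [hL, h1]
    rw [← h2]
    simp [Complex.mul_re, Complex.mul_im]; ring
  · have hfd : HasFDerivAt h (Complex.reCLM.comp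
        ((ContinuousLinearMap.toSpanSingleton ℂ (deriv G 0)).restrictScalars ℝ)) 0 := by
      have hg : HasDerivAt G (deriv G 0) 0 := (hGd.differentiableAt hnb).hasDerivAt
      have := Complex.reCLM.hasFDerivAt.comp (0 : ℂ) (hg.hasFDerivAt.restrictScalars ℝ)
      refine this.congr_of_eventuallyEq ?_
      filter_upwards [hnb] with z hz
      exact (hGre z hz).symm
    rw [hfd.fderiv]
    simp [hL, ← Complex.ofReal_pow]
    ring

/-- Borel–Carathéodory for harmonic functions: an upper bound for `h` controls `h` linearly near
the centre. -/
theorem borel {h : ℂ → ℝ} {M : ℝ} (hM : 0 < M)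
    (hh : InnerProductSpace.HarmonicOnNhd h (ball 0 1)) (h0 : h 0 = 0)
    (hb : ∀ z ∈ ball (0 : ℂ) 1, h z ≤ M) {z : ℂ} (hz : ‖z‖ ≤ 1 / 2) : h z ≤ 4 * M * ‖z‖ := by
  obtain ⟨F, hF, hFh⟩ := hh.exists_analyticOnNhd_ball_re_eq
  have hz1 : z ∈ ball (0 : ℂ) 1 := by rw [mem_ball_zero_iff]; linarith
  have hGre : ∀ z ∈ ball (0 : ℂ) 1, (F z - F 0).re = h z := fun z hz => by
    have h1 := hFh hz
    have h2 := hFh (mem_ball_self (x := (0 : ℂ)) one_pos)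
    simp only at h1 h2
    simp [h1, h2, h0]
  have := Complex.borelCaratheodory_zero (f := fun z => F z - F 0) hM
    (hF.differentiableOn.sub_const _) (fun w hw => by
      show (F w - F 0).re ≤ M
      rw [hGre w hw]; exact hb w hw) one_pos hz1 (by simp)
  calc h z = (F z - F 0).re := (hGre z hz1).symm
    _ ≤ ‖F z - F 0‖ := Complex.re_le_norm _
    _ ≤ _ := this
    _ ≤ _ := by
      rw [div_le_iff₀ (by linarith)]
      have : 0 ≤ M * ‖z‖ := by positivity
      nlinarith

/-! ### Conformal harmonic discs parametrized by `ℂ` -/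

/-- A conformal harmonic disc parametrized by the unit disc of `ℂ`, the two coordinate directions
being `1` and `Complex.I`. Harmonicity is phrased through the iterated Fréchet derivative. -/
structure CHDisk {d : ℕ} (f : ℂ → EuclideanSpace ℝ (Fin d)) : Prop where
  contDiffAt : ∀ z ∈ ball (0 : ℂ) 1, ContDiffAt ℝ 2 f z
  harmonic : ∀ z ∈ ball (0 : ℂ) 1,
    fderiv ℝ (fderiv ℝ f) z 1 1 + fderiv ℝ (fderiv ℝ f) z Complex.I Complex.I = 0
  norm_eq : ∀ z ∈ ball (0 : ℂ) 1, ‖fderiv ℝ f z 1‖ = ‖fderiv ℝ f z Complex.I‖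
  inner_eq : ∀ z ∈ ball (0 : ℂ) 1, ⟪fderiv ℝ f z 1, fderiv ℝ f z Complex.I⟫ = 0

variable {d : ℕ}

theorem differentiableAt_fderiv {E F : Type*} [NormedAddCommGroup E] [NormedSpace ℝ E]
    [NormedAddCommGroup F] [NormedSpace ℝ F] {f : E → F} {z : E} (hf : ContDiffAt ℝ 2 f z) :
    DifferentiableAt ℝ (fderiv ℝ f) z :=
  (hf.fderiv_right (m := 1) (by norm_num)).differentiableAt (by norm_num)

theorem fderiv_fderiv_apply {E F : Type*} [NormedAddCommGroup E] [NormedSpace ℝ E]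
    [NormedAddCommGroup F] [NormedSpace ℝ F] {f : E → F} {z : E} (hf : ContDiffAt ℝ 2 f z)
    (v w : E) : fderiv ℝ (fun y => fderiv ℝ f y v) z w = fderiv ℝ (fderiv ℝ f) z w v := by
  have h := (differentiableAt_fderiv hf).hasFDerivAt.clm_apply (hasFDerivAt_const v z)
  rw [h.fderiv]; simp

theorem second_fderiv_comp {w : EuclideanSpace ℝ (Fin d) → ℝ} {f : ℂ → EuclideanSpace ℝ (Fin d)}
    {z : ℂ} (hw : ContDiffAt ℝ 2 w (f z)) (hf : ContDiffAt ℝ 2 f z) (e : ℂ) :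
    fderiv ℝ (fderiv ℝ (w ∘ f)) z e e =
      fderiv ℝ (fderiv ℝ w) (f z) (fderiv ℝ f z e) (fderiv ℝ f z e) +
        fderiv ℝ w (f z) (fderiv ℝ (fderiv ℝ f) z e e) := by
  have h1 : fderiv ℝ (w ∘ f) =ᶠ[𝓝 z] fun y => (fderiv ℝ w (f y)).comp (fderiv ℝ f y) := by
    filter_upwards [hf.eventually (by simp), hf.continuousAt.eventually (hw.eventually (by simp))]
      with y h1 h2
    exact fderiv_comp y (h2.differentiableAt (by norm_num)) (h1.differentiableAt (by norm_num))
  have hfd := (hf.differentiableAt (by norm_num)).hasFDerivAt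
  have h2 := ((differentiableAt_fderiv hw).hasFDerivAt.comp z hfd).clm_comp
    (differentiableAt_fderiv hf).hasFDerivAt
  have h3 : HasFDerivAt (fun y => (fderiv ℝ w (f y)).comp (fderiv ℝ f y)) _ z := h2
  rw [h1.fderiv_eq, h3.fderiv]
  simp [add_comm]

/-- For a conformal harmonic `f`, the Laplacian of `w ∘ f` is the trace of the Hessian of `w` on
the (conformally parametrized) tangent plane of `f`. The first-order term vanishes as `Δ f = 0`. -/
theorem CHDisk.laplacian_comp {w : EuclideanSpace ℝ (Fin d) → ℝ}
    {f : ℂ → EuclideanSpace ℝ (Fin d)} (hf : CHDisk f)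
    {z : ℂ} (hz : z ∈ ball (0 : ℂ) 1) (hw : ContDiffAt ℝ 2 w (f z)) :
    Δ (w ∘ f) z =
      fderiv ℝ (fderiv ℝ w) (f z) (fderiv ℝ f z 1) (fderiv ℝ f z 1) +
      fderiv ℝ (fderiv ℝ w) (f z) (fderiv ℝ f z Complex.I) (fderiv ℝ f z Complex.I) := by
  rw [laplacian_eq, second_fderiv_comp hw (hf.contDiffAt z hz),
    second_fderiv_comp hw (hf.contDiffAt z hz)]
  have := congrArg (fderiv ℝ w (f z)) (hf.harmonic z hz)
  rw [map_add, map_zero] at this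
  linarith

theorem fderiv_inner_sub (n x : EuclideanSpace ℝ (Fin d)) :
    fderiv ℝ (fun y => ⟪n, y - x⟫) = fun _ => innerSL ℝ n := by
  ext y v
  have : HasFDerivAt (fun y => ⟪n, y - x⟫) (innerSL ℝ n) y := by
    have := (innerSL ℝ n).hasFDerivAt.comp y ((hasFDerivAt_id y).sub_const x)
    simpa [Function.comp_def] using this
  rw [this.fderiv]

theorem CHDisk.harmonic_inner {f : ℂ → EuclideanSpace ℝ (Fin d)} (hf : CHDisk f)
    (n x : EuclideanSpace ℝ (Fin d)) :
    InnerProductSpace.HarmonicOnNhd (fun z => ⟪n, f z - x⟫) (ball 0 1) := by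
  have hw : ∀ y, ContDiffAt ℝ 2 (fun y => ⟪n, y - x⟫) y := fun y =>
    (innerSL ℝ n).contDiff.contDiffAt.comp y (contDiffAt_id.sub contDiffAt_const)
  intro z hz
  refine ⟨(hw (f z)).comp z (hf.contDiffAt z hz), ?_⟩
  filter_upwards [isOpen_ball.mem_nhds hz] with y hy
  have := hf.laplacian_comp hy (hw (f y))
  rw [fderiv_inner_sub] at this
  simpa [Function.comp_def] using this

theorem CHDisk.fderiv_inner {f : ℂ → EuclideanSpace ℝ (Fin d)} (hf : CHDisk f)
    (n x : EuclideanSpace ℝ (Fin d)) :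
    fderiv ℝ (fun z => ⟪n, f z - x⟫) 0 1 = ⟪n, fderiv ℝ f 0 1⟫ := by
  have hfd := ((hf.contDiffAt 0 (by simp)).differentiableAt (by norm_num)).hasFDerivAt
  have := (innerSL ℝ n).hasFDerivAt.comp (0 : ℂ) (hfd.sub_const x)
  have h2 : HasFDerivAt (fun z => ⟪n, f z - x⟫) _ 0 := this
  rw [h2.fderiv]; simp

/-- Localization: a conformal harmonic disc with bounded image stays near its centre on a smaller
concentric disc of uniform size. -/
theorem CHDisk.norm_sub_le {f : ℂ → EuclideanSpace ℝ (Fin d)} (hf : CHDisk f) {B : ℝ} (hB : 0 < B)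
    (hb : ∀ z ∈ ball (0 : ℂ) 1, ‖f z - f 0‖ ≤ B) {z : ℂ} (hz : ‖z‖ ≤ 1 / 2) :
    ‖f z - f 0‖ ≤ 4 * B * ‖z‖ := by
  by_cases h0 : f z - f 0 = 0
  · rw [h0, norm_zero]; positivity
  set n := ‖f z - f 0‖⁻¹ • (f z - f 0) with hn
  have hn1 : ‖n‖ = 1 := by
    rw [hn, norm_smul, norm_inv, norm_norm, inv_mul_cancel₀ (norm_ne_zero_iff.2 h0)]
  have := borel hB (hf.harmonic_inner n (f 0)) (by simp) (fun w hw =>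
    (real_inner_le_norm _ _).trans (by rw [hn1, one_mul]; exact hb w hw)) hz
  have h2 : ⟪n, f z - f 0⟫ = ‖f z - f 0‖ := by
    rw [hn, real_inner_smul_left, real_inner_self_eq_norm_sq]
    field_simp
  linarith

theorem second_fderiv_sub_sq {u : EuclideanSpace ℝ (Fin d) → ℝ} {y : EuclideanSpace ℝ (Fin d)}
    (hu : ContDiffAt ℝ 2 u y) (c : ℝ) (x v : EuclideanSpace ℝ (Fin d)) :
    fderiv ℝ (fderiv ℝ (fun y => u y - c / 2 * ‖y - x‖ ^ 2)) y v v =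
      fderiv ℝ (fderiv ℝ u) y v v - c * ‖v‖ ^ 2 := by
  have h1 : fderiv ℝ (fun y => u y - c / 2 * ‖y - x‖ ^ 2) =ᶠ[𝓝 y]
      fun y => fderiv ℝ u y - c • innerSL ℝ (y - x) := by
    filter_upwards [hu.eventually (by simp)] with y hy
    have h2 := (((hasFDerivAt_id y).sub_const x).norm_sq).const_mul (c / 2)
    have h3 := (hy.differentiableAt (by norm_num)).hasFDerivAt.sub h2
    have h4 : HasFDerivAt (fun y => u y - c / 2 * ‖y - x‖ ^ 2) _ y := h3
    rw [h4.fderiv]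
    ext v
    simp [innerSL_apply_apply]
    ring
  rw [h1.fderiv_eq]
  have h5 := (innerSL ℝ (E := EuclideanSpace ℝ (Fin d))).hasFDerivAt.comp y
    ((hasFDerivAt_id y).sub_const x)
  have h6 := (differentiableAt_fderiv hu).hasFDerivAt.sub (h5.const_smul c)
  have h7 : HasFDerivAt (fun y => fderiv ℝ u y - c • innerSL ℝ (y - x)) _ y := h6
  rw [h7.fderiv]
  rw [← real_inner_self_eq_norm_sq v]
  rfl

/-! ### Derivative estimates at the centre -/

/-- Maximum principle along a conformal harmonic disc. The Hessian trace bound `2 κ` allows for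
subtracting `κ / 2 * ‖y - f 0‖ ^ 2` from `u` while keeping `u ∘ f` subharmonic; this negative term
is what absorbs the harmonic function `H` on the boundary circle. -/
theorem CHDisk.harmonic_majorant {u : EuclideanSpace ℝ (Fin d) → ℝ}
    {f : ℂ → EuclideanSpace ℝ (Fin d)} (hf : CHDisk f) {s κ m : ℝ} (hs : 0 < s) (hs1 : s < 1)
    (hu : ∀ z : ℂ, ‖z‖ ≤ s → ContDiffAt ℝ 2 u (f z))
    (hess : ∀ z : ℂ, ‖z‖ ≤ s → ∀ v w : EuclideanSpace ℝ (Fin d), ‖v‖ = ‖w‖ → ⟪v, w⟫ = 0 →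
      2 * κ * ‖v‖ ^ 2 ≤ fderiv ℝ (fderiv ℝ u) (f z) v v + fderiv ℝ (fderiv ℝ u) (f z) w w)
    {H : ℂ → ℝ} (hH : InnerProductSpace.HarmonicOnNhd H (ball 0 1))
    (hb : ∀ z : ℂ, ‖z‖ = s → u (f z) - κ / 2 * ‖f z - f 0‖ ^ 2 + H z ≤ m) :
    u (f 0) + H 0 ≤ m := by
  set w : EuclideanSpace ℝ (Fin d) → ℝ := fun y => u y - κ / 2 * ‖y - f 0‖ ^ 2 with hw
  have hwc : ∀ z : ℂ, ‖z‖ ≤ s → ContDiffAt ℝ 2 w (f z) := fun z hz =>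
    (hu z hz).sub (contDiffAt_const.mul ((contDiffAt_id.sub contDiffAt_const).norm_sq ℝ))
  have hmem : ∀ z : ℂ, ‖z‖ ≤ s → z ∈ ball (0 : ℂ) 1 := fun z hz => by
    rw [mem_ball_zero_iff]; linarith
  have hwf : ∀ z : ℂ, ‖z‖ ≤ s → ContDiffAt ℝ 2 (w ∘ f) z := fun z hz =>
    (hwc z hz).comp z (hf.contDiffAt z (hmem z hz))
  have := max_principle (Ψ := w ∘ f + H) (m := m) hs
    (fun z hz => (hwf z (mem_closedBall_zero_iff.1 hz)).add
      (hH z (hmem z (mem_closedBall_zero_iff.1 hz))).1) ?_ (fun z hz => hb z hz)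
  · simpa [hw] using this
  · intro z hz
    have hz' : ‖z‖ ≤ s := (mem_ball_zero_iff.1 hz).le
    have hz1 := hmem z hz'
    rw [(hwf z hz').laplacian_add (hH z hz1).1, hf.laplacian_comp hz1 (hwc z hz'),
      (hH z hz1).2.self_of_nhds, second_fderiv_sub_sq (hu z hz'), second_fderiv_sub_sq (hu z hz'),
      ← hf.norm_eq z hz1]
    have := hess z hz' _ _ (hf.norm_eq z hz1) (hf.inner_eq z hz1)
    simp only [Pi.zero_apply]
    linarith

/-- The derivative of a disc in `{u ≤ 0}` is of order at most `√(-u)` at the centre. Here `H` is a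
multiple of the harmonic extension of `re z * ⟪n, f z - f 0⟫`, with `n` the direction of
`fderiv ℝ f 0 1`. -/
theorem CHDisk.norm_fderiv_le {u : EuclideanSpace ℝ (Fin d) → ℝ}
    {f : ℂ → EuclideanSpace ℝ (Fin d)} (hf : CHDisk f) {s κ : ℝ} (hs : 0 < s) (hs1 : s < 1)
    (hκ : 0 < κ)
    (hu : ∀ z : ℂ, ‖z‖ ≤ s → ContDiffAt ℝ 2 u (f z))
    (hneg : ∀ z : ℂ, ‖z‖ ≤ s → u (f z) ≤ 0)
    (hess : ∀ z : ℂ, ‖z‖ ≤ s → ∀ v w : EuclideanSpace ℝ (Fin d), ‖v‖ = ‖w‖ → ⟪v, w⟫ = 0 →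
      2 * κ * ‖v‖ ^ 2 ≤ fderiv ℝ (fderiv ℝ u) (f z) v v + fderiv ℝ (fderiv ℝ u) (f z) w w) :
    κ * s ^ 2 / 8 * ‖fderiv ℝ f 0 1‖ ^ 2 ≤ -u (f 0) := by
  set W := fderiv ℝ f 0 1 with hW
  by_cases hW0 : W = 0
  · simpa [hW0] using hneg 0 (by simpa using hs.le)
  set n := ‖W‖⁻¹ • W with hn
  have hn1 : ‖n‖ = 1 := by
    rw [hn, norm_smul, norm_inv, norm_norm, inv_mul_cancel₀ (norm_ne_zero_iff.2 hW0)]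
  have hnW : ⟪n, W⟫ = ‖W‖ := by
    rw [hn, real_inner_smul_left, real_inner_self_eq_norm_sq]
    field_simp
  obtain ⟨K, hK, hKs, hK0⟩ := exists_harmonic_multiplier hs (hf.harmonic_inner n (f 0)) (by simp)
  rw [hf.fderiv_inner, ← hW, hnW] at hK0
  have hH : InnerProductSpace.HarmonicOnNhd ((κ / 2 * ‖W‖) • K) (ball 0 1) :=
    fun z hz => (hK z hz).const_smul
  have := hf.harmonic_majorant (m := κ / 2 * (‖W‖ / 2) ^ 2 * s ^ 2) hs hs1 hu hess hH ?_
  · simp only [Pi.smul_apply, hK0, smul_eq_mul] at this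
    nlinarith
  · intro z hz
    have h1 := hKs z (by rw [mem_ball_zero_iff]; linarith) hz
    have h2 := hneg z hz.le
    simp only [Pi.smul_apply, h1, smul_eq_mul]
    set h := ⟪n, f z - f 0⟫ with hh
    have h3 : h ^ 2 ≤ ‖f z - f 0‖ ^ 2 := by
      have := abs_real_inner_le_norm n (f z - f 0)
      rw [hn1, one_mul] at this
      rw [← sq_abs h]
      gcongr
    have h4 : z.re ^ 2 ≤ s ^ 2 := by
      have := Complex.abs_re_le_norm z
      rw [hz] at this
      rw [← sq_abs z.re]; gcongr
    -- completing the square bounds `‖W‖ * (z.re * h)` by the negative term and a constant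
    have h5 := sq_nonneg (h - ‖W‖ / 2 * z.re)
    have h6 : (‖W‖ / 2) ^ 2 * z.re ^ 2 ≤ (‖W‖ / 2) ^ 2 * s ^ 2 := by gcongr
    have h7 : ‖W‖ * (z.re * h) ≤ ‖f z - f 0‖ ^ 2 + (‖W‖ / 2) ^ 2 * s ^ 2 := by nlinarith
    have h8 := mul_le_mul_of_nonneg_left h7 (half_pos hκ).le
    linarith

/-- If the disc stays, up to a quadratic error, on one side of a hyperplane at distance `a` with
normal `n`, then the normal derivative at the centre is linear in `a` and `-u`. The harmonic
function is `H = μ (s h + σ K)` with `h = ⟪n, f - f 0⟫`, `σ = ±1` and `K = re z * h` on the circle: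
there `H = μ (s + σ re z) h` with a nonnegative factor, so the one-sided bound on `h` suffices. -/
theorem CHDisk.abs_inner_fderiv_le {u : EuclideanSpace ℝ (Fin d) → ℝ}
    {f : ℂ → EuclideanSpace ℝ (Fin d)} (hf : CHDisk f) {s κ : ℝ} (hs : 0 < s) (hs1 : s < 1)
    (hκ : 0 < κ)
    (hu : ∀ z : ℂ, ‖z‖ ≤ s → ContDiffAt ℝ 2 u (f z))
    (hneg : ∀ z : ℂ, ‖z‖ ≤ s → u (f z) ≤ 0)
    (hess : ∀ z : ℂ, ‖z‖ ≤ s → ∀ v w : EuclideanSpace ℝ (Fin d), ‖v‖ = ‖w‖ → ⟪v, w⟫ = 0 →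
      2 * κ * ‖v‖ ^ 2 ≤ fderiv ℝ (fderiv ℝ u) (f z) v v + fderiv ℝ (fderiv ℝ u) (f z) w w)
    {a b : ℝ} (ha : 0 ≤ a) (hb : 0 < b) (n : EuclideanSpace ℝ (Fin d))
    (hn : ∀ z : ℂ, ‖z‖ = s → ⟪n, f z - f 0⟫ ≤ a + b * ‖f z - f 0‖ ^ 2) :
    |⟪n, fderiv ℝ f 0 1⟫| ≤ 4 * a / s + 8 * b / (κ * s) * (-u (f 0)) := by
  obtain ⟨K, hK, hKs, hK0⟩ := exists_harmonic_multiplier hs (hf.harmonic_inner n (f 0)) (by simp)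
  rw [hf.fderiv_inner] at hK0
  set W := ⟪n, fderiv ℝ f 0 1⟫ with hW
  set μ := κ / (4 * s * b) with hμ
  have hμp : 0 < μ := by positivity
  have key : ∀ σ : ℝ, |σ| = 1 → σ * W ≤ 4 * a / s + 8 * b / (κ * s) * (-u (f 0)) := by
    intro σ hσ
    have hH : InnerProductSpace.HarmonicOnNhd
        ((μ * s) • (fun z => ⟪n, f z - f 0⟫) + (μ * σ) • K) (ball 0 1) :=
      fun z hz => ((hf.harmonic_inner n (f 0) z hz).const_smul).add ((hK z hz).const_smul)
    have := hf.harmonic_majorant (m := μ * (2 * s * a)) hs hs1 hu hess hH ?_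
    · simp only [Pi.add_apply, Pi.smul_apply, hK0, smul_eq_mul, sub_self, inner_zero_right] at this
      have h1 : σ * W = (μ * σ * (s ^ 2 / 2 * W)) * (2 / (μ * s ^ 2)) := by field_simp
      have h2 : 4 * a / s + 8 * b / (κ * s) * (-u (f 0)) =
          (μ * (2 * s * a) - u (f 0)) * (2 / (μ * s ^ 2)) := by
        rw [hμ]; field_simp; ring
      rw [h1, h2]
      gcongr
      linarith
    · intro z hz
      have h1 := hKs z (by rw [mem_ball_zero_iff]; linarith) hz
      have h2 := hneg z hz.le
      simp only [Pi.add_apply, Pi.smul_apply, h1, smul_eq_mul]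
      have h3 := hn z hz
      set h := ⟪n, f z - f 0⟫ with hh
      set N := ‖f z - f 0‖ ^ 2 with hN
      have hN0 : 0 ≤ N := by positivity
      have h4 : |σ * z.re| ≤ s := by
        rw [abs_mul, hσ, one_mul, ← hz]; exact Complex.abs_re_le_norm z
      obtain ⟨h5, h6⟩ := abs_le.1 h4
      have h7 : (s + σ * z.re) * h ≤ 2 * s * (a + b * N) :=
        calc (s + σ * z.re) * h ≤ (s + σ * z.re) * (a + b * N) :=
              mul_le_mul_of_nonneg_left h3 (by linarith)
          _ ≤ _ := mul_le_mul_of_nonneg_right (by linarith) (by positivity)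
      have h8 := mul_le_mul_of_nonneg_left h7 hμp.le
      have h9 : μ * (2 * s * (b * N)) = κ / 2 * N := by
        rw [hμ]; field_simp; ring
      nlinarith
  refine abs_le'.2 ⟨?_, ?_⟩
  · simpa using key 1 (by simp)
  · simpa using key (-1) (by simp)

/-! ### Uniform data along the boundary -/

/-- Uniform constants for a function `u` in the closed `ρ`-balls centred on `S`: `c₀` and `M` bound
the gradient on `S`, `M` also bounds the second-order Taylor remainder, and `2 κ` bounds the trace
of the Hessian on 2-planes from below (stated for a conformal pair `v`, `w`). -/
structure UniformBounds (S : Set (EuclideanSpace ℝ (Fin d))) (u : EuclideanSpace ℝ (Fin d) → ℝ)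
    (ρ c₀ M κ : ℝ) : Prop where
  ρ_pos : 0 < ρ
  c₀_pos : 0 < c₀
  M_pos : 0 < M
  κ_pos : 0 < κ
  contDiffAt : ∀ p ∈ S, ∀ y ∈ closedBall p ρ, ContDiffAt ℝ 2 u y
  taylor : ∀ p ∈ S, ∀ y ∈ closedBall p ρ, |u y - u p - fderiv ℝ u p (y - p)| ≤ M * ‖y - p‖ ^ 2
  hess : ∀ p ∈ S, ∀ y ∈ closedBall p ρ, ∀ v w : EuclideanSpace ℝ (Fin d),
    ‖v‖ = ‖w‖ → ⟪v, w⟫ = 0 →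
      2 * κ * ‖v‖ ^ 2 ≤ fderiv ℝ (fderiv ℝ u) y v v + fderiv ℝ (fderiv ℝ u) y w w
  le_norm : ∀ p ∈ S, c₀ ≤ ‖fderiv ℝ u p‖
  norm_le : ∀ p ∈ S, ‖fderiv ℝ u p‖ ≤ M

theorem exists_uniformBounds {S U : Set (EuclideanSpace ℝ (Fin d))}
    {u : EuclideanSpace ℝ (Fin d) → ℝ} (hS : IsCompact S) (hU : IsOpen U) (hSU : S ⊆ U)
    (hu : ContDiffOn ℝ 2 u U) (hdu : ∀ x ∈ S, fderiv ℝ u x ≠ 0)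
    (hess : ∀ x ∈ U, ∀ v w : EuclideanSpace ℝ (Fin d), ‖v‖ = 1 → ‖w‖ = 1 → ⟪v, w⟫ = 0 →
      0 < fderiv ℝ (fderiv ℝ u) x v v + fderiv ℝ (fderiv ℝ u) x w w) :
    ∃ ρ c₀ M κ : ℝ, UniformBounds S u ρ c₀ M κ ∧ ∀ p ∈ S, closedBall p ρ ⊆ U := by
  have hua : ∀ y ∈ U, ContDiffAt ℝ 2 u y := fun y hy => hu.contDiffAt (hU.mem_nhds hy)
  obtain ⟨ρ, hρ, hρU⟩ := hS.exists_cthickening_subset_open hU hSU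
  set T := cthickening ρ S with hT
  have hTc : IsCompact T := hS.cthickening
  have hball : ∀ p ∈ S, closedBall p ρ ⊆ T := fun p hp => closedBall_subset_cthickening hp ρ
  have hc1 : ContinuousOn (fderiv ℝ u) T := fun y hy =>
    ((hua y (hρU hy)).fderiv_right (m := 1) (by norm_num)).continuousAt.continuousWithinAt
  have hc2 : ContinuousOn (fderiv ℝ (fderiv ℝ u)) T := fun y hy =>
    (((hua y (hρU hy)).fderiv_right (m := 1) (by norm_num)).fderiv_right (m := 0)
      (by norm_num)).continuousAt.continuousWithinAt
  have hST : S ⊆ T := self_subset_cthickening S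
  obtain ⟨M₁, hM₁⟩ := hTc.exists_bound_of_continuousOn hc1
  have hc2n : ContinuousOn (fun y => ‖fderiv ℝ (fderiv ℝ u) y‖) T := fun y hy =>
    ContinuousWithinAt.norm (E := EuclideanSpace ℝ (Fin d) →L[ℝ] EuclideanSpace ℝ (Fin d) →L[ℝ] ℝ)
      (hc2 y hy)
  obtain ⟨M₂, hM₂'⟩ := hTc.bddAbove_image hc2n
  have hM₂ : ∀ y ∈ T, ‖fderiv ℝ (fderiv ℝ u) y‖ ≤ M₂ := fun y hy =>
    hM₂' (mem_image_of_mem _ hy)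
  obtain ⟨c₀, hc₀, hc₀'⟩ := hS.exists_forall_le' (hc1.mono hST).norm
    (fun p hp => norm_pos_iff.2 (hdu p hp))
  -- the compact set of orthonormal pairs over `T`
  set Q : Set (EuclideanSpace ℝ (Fin d) × EuclideanSpace ℝ (Fin d) × EuclideanSpace ℝ (Fin d)) :=
    (T ×ˢ (sphere 0 1 ×ˢ sphere 0 1)) ∩ {q | ⟪q.2.1, q.2.2⟫ = 0} with hQ
  have hQc : IsCompact Q := by
    refine (hTc.prod ((isCompact_sphere _ _).prod (isCompact_sphere _ _))).inter_right ?_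
    exact isClosed_eq (by fun_prop) continuous_const
  have hcQ : ContinuousOn (fun q => fderiv ℝ (fderiv ℝ u) q.1 q.2.1 q.2.1 +
      fderiv ℝ (fderiv ℝ u) q.1 q.2.2 q.2.2) Q := by
    have h1 : ContinuousOn (fun q : EuclideanSpace ℝ (Fin d) × EuclideanSpace ℝ (Fin d) ×
        EuclideanSpace ℝ (Fin d) => fderiv ℝ (fderiv ℝ u) q.1) Q :=
      hc2.comp continuousOn_fst (fun q hq => hq.1.1)
    have h2 : ContinuousOn (fun q : EuclideanSpace ℝ (Fin d) × EuclideanSpace ℝ (Fin d) ×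
        EuclideanSpace ℝ (Fin d) => q.2.1) Q := by fun_prop
    have h3 : ContinuousOn (fun q : EuclideanSpace ℝ (Fin d) × EuclideanSpace ℝ (Fin d) ×
        EuclideanSpace ℝ (Fin d) => q.2.2) Q := by fun_prop
    exact ((h1.clm_apply h2).clm_apply h2).add ((h1.clm_apply h3).clm_apply h3)
  obtain ⟨κ, hκ, hκ'⟩ := hQc.exists_forall_le' hcQ (a := 0) (by
    rintro ⟨y, v, w⟩ ⟨⟨hy, hv, hw⟩, hvw⟩
    exact hess y (hρU hy) v w (by simpa using hv) (by simpa using hw) hvw)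
  refine ⟨ρ, c₀, max (max M₁ M₂) 1, κ / 2, ⟨hρ, hc₀, by positivity, by positivity, ?_, ?_, ?_,
    hc₀', ?_⟩, fun p hp => (hball p hp).trans hρU⟩
  · exact fun p hp y hy => hua y (hρU (hball p hp hy))
  · intro p hp y hy
    have hsub : closedBall p ‖y - p‖ ⊆ closedBall p ρ :=
      closedBall_subset_closedBall (by rwa [mem_closedBall, dist_eq_norm] at hy)
    have hM0 : M₂ ≤ max (max M₁ M₂) 1 := (le_max_right _ _).trans (le_max_left _ _)
    have h1 : ∀ z ∈ closedBall p ‖y - p‖, ‖fderiv ℝ u z - fderiv ℝ u p‖ ≤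
        max (max M₁ M₂) 1 * ‖y - p‖ := by
      intro z hz
      have := (convex_closedBall p ρ).norm_image_sub_le_of_norm_fderiv_le (𝕜 := ℝ)
        (f := fderiv ℝ u) (C := max (max M₁ M₂) 1)
        (fun q hq => differentiableAt_fderiv (hua q (hρU (hball p hp hq))))
        (fun q hq => (hM₂ q (hball p hp hq)).trans hM0) (mem_closedBall_self hρ.le) (hsub hz)
      refine this.trans ?_
      gcongr
      simpa [dist_eq_norm] using hz
    have := (convex_closedBall p ‖y - p‖).norm_image_sub_le_of_norm_fderiv_le' (𝕜 := ℝ) (f := u)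
      (fun q hq => (hua q (hρU (hball p hp (hsub hq)))).differentiableAt (by norm_num)) h1
      (mem_closedBall_self (norm_nonneg _)) (show y ∈ closedBall p ‖y - p‖ by
        simp [dist_eq_norm])
    rw [Real.norm_eq_abs] at this
    exact this.trans (by rw [mul_assoc, sq])
  · intro p hp y hy v w hvw hin
    by_cases hv : v = 0
    · have hw : w = 0 := by rw [← norm_eq_zero, ← hvw, hv, norm_zero]
      simp [hv, hw]
    have hv0 : ‖v‖ ≠ 0 := norm_ne_zero_iff.2 hv
    have h1 := hκ' (y, ‖v‖⁻¹ • v, ‖v‖⁻¹ • w) ⟨⟨hball p hp hy, by simp [norm_smul, hv0],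
      by simp [norm_smul, ← hvw, hv0]⟩, by simp [inner_smul_left, inner_smul_right, hin]⟩
    simp only [map_smul, smul_apply, smul_eq_mul] at h1
    have h2 := mul_le_mul_of_nonneg_left h1 (sq_nonneg ‖v‖)
    have h3 : ∀ t : ℝ, ‖v‖ ^ 2 * (‖v‖⁻¹ * (‖v‖⁻¹ * t)) = t := fun t => by field_simp
    rw [mul_add, h3, h3] at h2
    linarith
  · exact fun p hp => (hM₁ p (hST hp)).trans ((le_max_left _ _).trans (le_max_left _ _))

/-- At a boundary point `p` nearest to `x`, the differential of the defining function is a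
nonnegative multiple of the inner product with `(p - x) / ‖p - x‖`: the open ball about `x` through
`p` lies in `D`, so `u` restricted to the closed ball is maximal at `p`. -/
theorem fderiv_eq_normal {D U : Set (EuclideanSpace ℝ (Fin d))} {u : EuclideanSpace ℝ (Fin d) → ℝ}
    (hD : IsOpen D) (hU : IsOpen U) (hDU : D ∩ U = {x | x ∈ U ∧ u x < 0})
    (hfr : frontier D = {x | x ∈ U ∧ u x = 0}) {x p : EuclideanSpace ℝ (Fin d)}
    (hx : x ∈ D) (hp : p ∈ frontier D) (hxp : dist x p = infDist x (frontier D))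
    (hu : DifferentiableAt ℝ u p) (v : EuclideanSpace ℝ (Fin d)) :
    fderiv ℝ u p v = ‖fderiv ℝ u p‖ * ⟪‖p - x‖⁻¹ • (p - x), v⟫ := by
  have hne : x ≠ p := by
    rintro rfl
    exact (hD.frontier_eq ▸ hp).2 hx
  set δ := dist x p with hδ
  have hδp : 0 < δ := dist_pos.2 hne
  have hballD : ball x δ ⊆ D := by
    refine (convex_ball x δ).isPreconnected.subset_of_closure_inter_subset hD
      ⟨x, mem_ball_self hδp, hx⟩ ?_
    rintro y ⟨hyc, hyb⟩
    by_contra hy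
    have : infDist x (frontier D) ≤ dist x y := infDist_le_dist_of_mem
      (by rw [hD.frontier_eq]; exact ⟨hyc, hy⟩)
    rw [mem_ball, dist_comm] at hyb
    linarith
  have hpU : p ∈ U := by rw [hfr] at hp; exact hp.1
  have hup : u p = 0 := by rw [hfr] at hp; exact hp.2
  have hmax : IsLocalMaxOn u (closedBall x δ) p := by
    filter_upwards [mem_nhdsWithin_of_mem_nhds (hU.mem_nhds hpU), self_mem_nhdsWithin] with y hyU hyB
    rw [hup]
    have hyc : y ∈ closure D := by
      rw [← closure_ball x hδp.ne'] at hyB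
      exact closure_mono hballD hyB
    rw [closure_eq_self_union_frontier] at hyc
    rcases hyc with h | h
    · have : y ∈ D ∩ U := ⟨h, hyU⟩
      rw [hDU] at this; exact this.2.le
    · rw [hfr] at h; exact h.2.le
  have hcone : ∀ y ∈ closedBall x δ, fderiv ℝ u p (y - p) ≤ 0 := fun y hy =>
    hmax.hasFDerivWithinAt_nonpos hu.hasFDerivAt.hasFDerivWithinAt
      (sub_mem_posTangentConeAt_of_segment_subset
        ((convex_closedBall x δ).segment_subset (by simp [hδ, dist_comm]) hy))
  set g := (InnerProductSpace.toDual ℝ _).symm (fderiv ℝ u p) with hg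
  have hgv : ∀ v, fderiv ℝ u p v = ⟪g, v⟫ := fun v => by
    rw [hg, InnerProductSpace.toDual_symm_apply]
  have hgn : ‖fderiv ℝ u p‖ = ‖g‖ := by rw [hg, LinearIsometryEquiv.norm_map]
  rw [hgn, hgv]
  by_cases hg0 : g = 0
  · simp [hg0]
  have hgn0 : ‖g‖ ≠ 0 := norm_ne_zero_iff.2 hg0
  have hpx : ‖p - x‖ = δ := by rw [hδ, dist_comm, dist_eq_norm]
  have h1 := hcone (x + (δ / ‖g‖) • g) (by
    rw [mem_closedBall, dist_eq_norm, add_sub_cancel_left, norm_smul, norm_div, norm_norm,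
      Real.norm_eq_abs, abs_of_pos hδp, div_mul_cancel₀ _ hgn0])
  have h2 : x + (δ / ‖g‖) • g - p = (δ / ‖g‖) • g - (p - x) := by abel
  rw [hgv, h2, inner_sub_right, real_inner_smul_right, real_inner_self_eq_norm_sq] at h1
  have h3 : δ / ‖g‖ * ‖g‖ ^ 2 = ‖g‖ * δ := by field_simp
  have h4 := real_inner_le_norm g (p - x)
  rw [hpx] at h4
  have h5 : ⟪g, p - x⟫ = ‖g‖ * ‖p - x‖ := by rw [hpx]; linarith
  have h6 := inner_eq_norm_mul_iff_real.1 h5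
  rw [hpx] at h6 ⊢
  have h7 : g = ‖g‖ • δ⁻¹ • (p - x) := by
    rw [smul_comm, ← h6, smul_smul, inv_mul_cancel₀ hδp.ne', one_smul]
  conv_lhs => rw [h7]
  rw [real_inner_smul_left]

theorem exists_orthogonal (hd : 3 ≤ d) (v n : EuclideanSpace ℝ (Fin d)) :
    ∃ w : EuclideanSpace ℝ (Fin d), ‖w‖ = ‖v‖ ∧ ⟪v, w⟫ = 0 ∧ ⟪n, w⟫ = 0 := by
  classical
  set K := Submodule.span ℝ ({v, n} : Set (EuclideanSpace ℝ (Fin d))) with hK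
  have h1 : Module.finrank ℝ K ≤ 2 := by
    refine (finrank_span_le_card (R := ℝ) ({v, n} : Set (EuclideanSpace ℝ (Fin d)))).trans ?_
    simpa using Finset.card_le_two
  have h2 := K.finrank_add_finrank_orthogonal
  rw [finrank_euclideanSpace_fin] at h2
  have h3 : Kᗮ ≠ ⊥ := by
    intro h; rw [h, finrank_bot] at h2; omega
  obtain ⟨w, hw, hw0⟩ := Submodule.exists_mem_ne_zero_of_ne_bot h3
  have hv : ⟪v, w⟫ = 0 := hw v (Submodule.subset_span (by simp))
  have hn : ⟪n, w⟫ = 0 := hw n (Submodule.subset_span (by simp))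
  refine ⟨(‖v‖ / ‖w‖) • w, ?_, by simp [inner_smul_right, hv], by simp [inner_smul_right, hn]⟩
  rw [norm_smul, norm_div, norm_norm, norm_norm, div_mul_cancel₀ _ (norm_ne_zero_iff.2 hw0)]

/-! ### Passing from `ℝ²` to `ℂ` -/

/-- The isometric identification of `ℂ` with `ℝ²`. -/
def planeIso : ℂ ≃ₗᵢ[ℝ] Euc 2 := Complex.orthonormalBasisOneI.repr

theorem planeIso_one : planeIso 1 = EuclideanSpace.single 0 1 := by
  simpa [planeIso] using Complex.orthonormalBasisOneI.repr_self 0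

theorem planeIso_I : planeIso Complex.I = EuclideanSpace.single 1 1 := by
  simpa [planeIso] using Complex.orthonormalBasisOneI.repr_self 1

theorem fderiv_comp_planeIso {F : Type*} [NormedAddCommGroup F] [NormedSpace ℝ F] (f : Euc 2 → F)
    (z v : ℂ) : fderiv ℝ (f ∘ planeIso) z v = fderiv ℝ f (planeIso z) (planeIso v) := by
  have := planeIso.toContinuousLinearEquiv.comp_right_fderiv (f := f) (x := z)
  exact congrArg (fun L => L v) this

theorem _root_.ConformalHarmonicOnDisk.chDisk {f : Euc 2 → Euc d}
    (hf : ConformalHarmonicOnDisk f) : CHDisk (f ∘ planeIso) := by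
  obtain ⟨hc, hh, hconf⟩ := hf
  have hmem : ∀ z ∈ ball (0 : ℂ) 1, planeIso z ∈ unitDisk := fun z hz => by
    simpa [unitDisk] using hz
  have hC : ∀ z ∈ ball (0 : ℂ) 1, ContDiffAt ℝ 2 (f ∘ planeIso) z := fun z hz =>
    (hc.contDiffAt (isOpen_ball.mem_nhds (hmem z hz))).comp z planeIso.contDiff.contDiffAt
  have h1 : ∀ z, fderiv ℝ (f ∘ planeIso) z 1 = pd 0 f (planeIso z) := fun z => by
    rw [fderiv_comp_planeIso, planeIso_one, pd]
  have hI : ∀ z, fderiv ℝ (f ∘ planeIso) z Complex.I = pd 1 f (planeIso z) := fun z => by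
    rw [fderiv_comp_planeIso, planeIso_I, pd]
  refine ⟨hC, fun z hz => ?_, fun z hz => ?_, fun z hz => ?_⟩
  · rw [← fderiv_fderiv_apply (hC z hz), ← fderiv_fderiv_apply (hC z hz)]
    simp only [h1, hI]
    have := hh _ (hmem z hz)
    rwa [← planeIso_one, ← planeIso_I, ← fderiv_comp_planeIso, ← fderiv_comp_planeIso] at this
  · rw [h1, hI]; exact (hconf _ (hmem z hz)).1
  · rw [h1, hI]; exact (hconf _ (hmem z hz)).2

/-! ### Affine discs -/

/-- The affine disc through `x` spanned by `a` and `b`. -/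
def affineDisc (x a b : Euc d) (z : Euc 2) : Euc d := x + (z 0 • a + z 1 • b)

theorem hasFDerivAt_affineDisc (x a b : Euc d) (z : Euc 2) :
    HasFDerivAt (affineDisc x a b)
      ((EuclideanSpace.proj 0 : Euc 2 →L[ℝ] ℝ).smulRight a +
        (EuclideanSpace.proj 1 : Euc 2 →L[ℝ] ℝ).smulRight b) z :=
  ((((EuclideanSpace.proj 0 : Euc 2 →L[ℝ] ℝ).smulRight a +
    (EuclideanSpace.proj 1 : Euc 2 →L[ℝ] ℝ).smulRight b)).hasFDerivAt (x := z)).const_add x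

theorem pd_zero_affineDisc (x a b : Euc d) : pd 0 (affineDisc x a b) = fun _ => a := by
  ext1 z
  rw [pd, (hasFDerivAt_affineDisc x a b z).fderiv]
  simp

theorem pd_one_affineDisc (x a b : Euc d) : pd 1 (affineDisc x a b) = fun _ => b := by
  ext1 z
  rw [pd, (hasFDerivAt_affineDisc x a b z).fderiv]
  simp

theorem conformalHarmonicOnDisk_affineDisc (x : Euc d) {a b : Euc d} (hab : ‖a‖ = ‖b‖)
    (h : ⟪a, b⟫ = 0) : ConformalHarmonicOnDisk (affineDisc x a b) := by
  refine ⟨?_, fun z _ => ?_, fun z _ => ?_⟩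
  · have : ContDiff ℝ 2 (affineDisc x a b) := by unfold affineDisc; fun_prop
    exact this.contDiffOn
  · simp [pd_zero_affineDisc, pd_one_affineDisc]
  · simp [pd_zero_affineDisc, pd_one_affineDisc, hab, h]

theorem norm_smul_add_smul_sq_le {a b : Euc d} (hab : ‖a‖ = ‖b‖)
    (h : ⟪a, b⟫ = 0) {z : Euc 2} (hz : z ∈ unitDisk) : ‖z 0 • a + z 1 • b‖ ^ 2 ≤ ‖a‖ ^ 2 := by
  have hz1 : ‖z‖ < 1 := by simpa [unitDisk] using hz
  have hz2 : z 0 ^ 2 + z 1 ^ 2 ≤ 1 := by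
    have := EuclideanSpace.norm_sq_eq z
    simp only [Fin.sum_univ_two, Real.norm_eq_abs, sq_abs] at this
    rw [← this]
    nlinarith [norm_nonneg z]
  rw [norm_add_sq_real, norm_smul, norm_smul, real_inner_smul_left, real_inner_smul_right, h,
    ← hab, mul_pow, mul_pow, Real.norm_eq_abs, Real.norm_eq_abs, sq_abs, sq_abs]
  nlinarith [sq_nonneg ‖a‖]

/-! ### Behaviour near a boundary point -/

theorem norm_sub_smul_sq_le {n : Euc d} (hn : ‖n‖ = 1) (Y : Euc d) (δ : ℝ) :
    ‖Y - δ • n‖ ^ 2 ≤ 2 * ‖Y‖ ^ 2 + 2 * δ ^ 2 := by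
  have h := norm_sub_le Y (δ • n)
  rw [norm_smul, hn, mul_one, Real.norm_eq_abs] at h
  have h2 : ‖Y - δ • n‖ ^ 2 ≤ (‖Y‖ + |δ|) ^ 2 := by gcongr
  nlinarith [sq_nonneg (‖Y‖ - |δ|), sq_abs δ]

/-- A point whose offset `Y` from the point at depth `δ` is small (at most `δ / 4` in the normal
direction and of order `√δ` overall) stays where `u < 0`. -/
theorem UniformBounds.neg_of_close {S : Set (Euc d)} {u : Euc d → ℝ} {ρ c₀ M κ : ℝ}
    (hB : UniformBounds S u ρ c₀ M κ) {p n : Euc d} (hp : p ∈ S) (hup : u p = 0) (hn : ‖n‖ = 1)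
    (hdu : ∀ v, fderiv ℝ u p v = ‖fderiv ℝ u p‖ * ⟪n, v⟫) {δ : ℝ} (hδ : 0 < δ) (hδρ : δ ≤ ρ / 2)
    (hδM : 8 * M * δ ≤ c₀) {Y : Euc d} (h1 : ⟪n, Y⟫ ≤ δ / 4) (h2 : 8 * M * ‖Y‖ ^ 2 ≤ c₀ * δ)
    (h3 : ‖Y‖ ≤ ρ / 2) :
    p + (Y - δ • n) ∈ closedBall p ρ ∧ u (p + (Y - δ • n)) < 0 := by
  have hmem : p + (Y - δ • n) ∈ closedBall p ρ := by
    rw [mem_closedBall, dist_eq_norm, add_sub_cancel_left]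
    have h := norm_sub_le Y (δ • n)
    rw [norm_smul, hn, mul_one, Real.norm_eq_abs, abs_of_pos hδ] at h
    linarith
  refine ⟨hmem, ?_⟩
  have ht := (abs_le.1 (hB.taylor p hp _ hmem)).2
  rw [add_sub_cancel_left, hup, hdu, inner_sub_right, real_inner_smul_right,
    real_inner_self_eq_norm_sq, hn] at ht
  have h4 := hB.le_norm p hp
  have h5 := mul_le_mul_of_nonneg_left (norm_sub_smul_sq_le hn Y δ) hB.M_pos.le
  have h6 : ‖fderiv ℝ u p‖ * (⟪n, Y⟫ - δ) ≤ c₀ * (-(3 / 4 * δ)) := by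
    have : ‖fderiv ℝ u p‖ * (⟪n, Y⟫ - δ) ≤ ‖fderiv ℝ u p‖ * (-(3 / 4 * δ)) := by
      gcongr; linarith
    nlinarith
  have h7 := mul_le_mul_of_nonneg_right hδM hδ.le
  have h8 := mul_pos hB.c₀_pos hδ
  nlinarith

/-- For a disc in `{u ≤ 0}` centred at depth `δ`, the derivative at the centre is `O(√δ)` and
its normal component is `O(δ)`. -/
theorem UniformBounds.disc_bounds {S : Set (Euc d)} {u : Euc d → ℝ} {ρ c₀ M κ : ℝ}
    (hB : UniformBounds S u ρ c₀ M κ) {p n : Euc d} (hp : p ∈ S) (hup : u p = 0) (hn : ‖n‖ = 1)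
    (hdu : ∀ v, fderiv ℝ u p v = ‖fderiv ℝ u p‖ * ⟪n, v⟫) {δ : ℝ} (hδ : 0 < δ) (hδρ : δ ≤ ρ / 2)
    (hδ1 : δ ≤ 1) {f : ℂ → Euc d} (hf : CHDisk f) (hf0 : f 0 - p = -(δ • n)) {B s : ℝ}
    (hB0 : 0 < B) (hfB : ∀ z ∈ ball (0 : ℂ) 1, ‖f z - f 0‖ ≤ B) (hs : 0 < s) (hs2 : s ≤ 1 / 2)
    (hsB : 4 * B * s ≤ ρ / 2)
    (hneg : ∀ z ∈ ball (0 : ℂ) 1, f z ∈ closedBall p ρ → u (f z) ≤ 0) :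
    κ * s ^ 2 / 8 * ‖fderiv ℝ f 0 1‖ ^ 2 ≤ 2 * M * δ ∧
    |⟪n, fderiv ℝ f 0 1⟫| ≤
      (4 * (1 + 2 * M / c₀) / s + 8 * (2 * M / c₀) / (κ * s) * (2 * M)) * δ := by
  have hMp := hB.M_pos
  have hcp := hB.c₀_pos
  have hκp := hB.κ_pos
  have hsub : ∀ z, f z - p = (f z - f 0) - δ • n := fun z => by
    rw [sub_eq_add_neg _ (δ • n), ← hf0]; abel
  have hmem : ∀ z : ℂ, ‖z‖ ≤ s → f z ∈ closedBall p ρ := by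
    intro z hz
    have h1 := hf.norm_sub_le hB0 hfB (hz.trans hs2)
    have h2 : 4 * B * ‖z‖ ≤ 4 * B * s := by gcongr
    rw [mem_closedBall, dist_eq_norm, hsub]
    have h := norm_sub_le (f z - f 0) (δ • n)
    rw [norm_smul, hn, mul_one, Real.norm_eq_abs, abs_of_pos hδ] at h
    linarith
  have hs1 : s < 1 := by linarith
  have hneg' : ∀ z : ℂ, ‖z‖ ≤ s → u (f z) ≤ 0 := fun z hz =>
    hneg z (by rw [mem_ball_zero_iff]; linarith) (hmem z hz)
  have hu' : ∀ z : ℂ, ‖z‖ ≤ s → ContDiffAt ℝ 2 u (f z) := fun z hz =>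
    hB.contDiffAt p hp _ (hmem z hz)
  have hess' := fun (z : ℂ) (hz : ‖z‖ ≤ s) => hB.hess p hp _ (hmem z hz)
  have hux : -u (f 0) ≤ 2 * M * δ := by
    have ht := (abs_le.1 (hB.taylor p hp _ (hmem 0 (by simpa using hs.le)))).1
    rw [hup, hdu, hf0, inner_neg_right, real_inner_smul_right, real_inner_self_eq_norm_sq, hn,
      norm_neg, norm_smul, hn, mul_one, Real.norm_eq_abs, sq_abs] at ht
    have h1 := mul_le_mul_of_nonneg_right (hB.norm_le p hp) hδ.le
    have h2 : M * δ ^ 2 ≤ M * δ := by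
      gcongr; nlinarith
    linarith
  refine ⟨(hf.norm_fderiv_le hs hs1 hκp hu' hneg' hess').trans hux, ?_⟩
  set b := 2 * M / c₀ with hb
  have hbp : 0 < b := by positivity
  have hbc : c₀ * b = 2 * M := by rw [hb]; field_simp
  have key := hf.abs_inner_fderiv_le (a := δ + b * δ ^ 2) (b := b) hs hs1 hκp hu' hneg' hess'
    (by positivity) hbp n ?_
  · have h1 : δ + b * δ ^ 2 ≤ (1 + b) * δ := by
      have : b * δ ^ 2 ≤ b * δ := by gcongr; nlinarith
      linarith
    calc _ ≤ _ := key
      _ ≤ 4 * ((1 + b) * δ) / s + 8 * b / (κ * s) * (2 * M * δ) := by gcongr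
      _ = _ := by ring
  · intro z hz
    have ht := (abs_le.1 (hB.taylor p hp _ (hmem z hz.le))).1
    rw [hup, hdu, hsub, inner_sub_right, real_inner_smul_right, real_inner_self_eq_norm_sq,
      hn] at ht
    have h1 := mul_le_mul_of_nonneg_left (norm_sub_smul_sq_le hn (f z - f 0) δ) hMp.le
    have h2 := hneg' z hz.le
    have h3 := hB.le_norm p hp
    set Y := f z - f 0 with hY
    by_cases h4 : ⟪n, Y⟫ - δ ≤ 0
    · have : 0 ≤ b * δ ^ 2 + b * ‖Y‖ ^ 2 := by positivity
      linarith
    · push Not at h4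
      have h5 := mul_le_mul_of_nonneg_right h3 h4.le
      have h6 : c₀ * (⟪n, Y⟫ - δ) ≤ c₀ * (b * δ ^ 2 + b * ‖Y‖ ^ 2) := by
        rw [mul_add, ← mul_assoc, ← mul_assoc, hbc]; linarith
      have h7 := le_of_mul_le_mul_left h6 hcp
      linarith

/-! ### Normal and tangential components, and the affine competitor -/

theorem norm_vN {x p : Euc d} (hn : ‖nvec x p‖ = 1) (v : Euc d) :
    ‖vN x p v‖ = |⟪nvec x p, v⟫| := by
  rw [vN, norm_smul, hn, mul_one, Real.norm_eq_abs, real_inner_comm]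

theorem norm_vT_le {x p : Euc d} (hn : ‖nvec x p‖ = 1) (v : Euc d) : ‖vT x p v‖ ≤ ‖v‖ := by
  have h : ‖vT x p v‖ ^ 2 ≤ ‖v‖ ^ 2 := by
    rw [vT, vN, norm_sub_sq_real, real_inner_smul_right, norm_smul, hn, mul_one,
      Real.norm_eq_abs, sq_abs]
    nlinarith [sq_nonneg ⟪v, nvec x p⟫]
  exact le_of_sq_le_sq h (norm_nonneg _)

theorem norm_le_vN_add_vT (x p v : Euc d) : ‖v‖ ≤ ‖vN x p v‖ + ‖vT x p v‖ := by
  have : v = vN x p v + vT x p v := by rw [vT]; abel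
  conv_lhs => rw [this]
  exact norm_add_le _ _

/-- The affine disc `x + z₀ r v + z₁ r w`, with `w` orthogonal to both `v` and the normal, lies in
`{u < 0}` as soon as `r` times the model metric of `v` is small. -/
theorem UniformBounds.exists_disc (hd : 3 ≤ d) {S : Set (Euc d)} {u : Euc d → ℝ} {ρ c₀ M κ : ℝ}
    (hB : UniformBounds S u ρ c₀ M κ) {x p : Euc d} (hp : p ∈ S) (hup : u p = 0)
    (hn : ‖nvec x p‖ = 1)
    (hdu : ∀ v, fderiv ℝ u p v = ‖fderiv ℝ u p‖ * ⟪nvec x p, v⟫) {δ : ℝ} (hδ : 0 < δ)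
    (hx : x - p = -(δ • nvec x p)) (hδ1 : δ ≤ 1) (hδρ : δ ≤ ρ / 2) (hδM : 8 * M * δ ≤ c₀)
    {a : ℝ} (ha : 0 < a) (ha8 : a ≤ 1 / 8) (haM : 8 * M * (3 * a) ^ 2 ≤ c₀) (haρ : 3 * a ≤ ρ / 2)
    {r : ℝ} (hr : 0 < r) {v : Euc d}
    (hrv : r * (‖vN x p v‖ / (2 * δ) + ‖vT x p v‖ / √δ) ≤ a) :
    ∃ f : Euc 2 → Euc d, ConformalHarmonicOnDisk f ∧
      (∀ z ∈ unitDisk, f z ∈ closedBall p ρ ∧ u (f z) < 0) ∧ f 0 = x ∧ pd 0 f 0 = r • v := by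
  obtain ⟨w, hwn, hvw, hnw⟩ := exists_orthogonal hd v (nvec x p)
  have hab : ‖r • v‖ = ‖r • w‖ := by rw [norm_smul, norm_smul, hwn]
  have hin : ⟪r • v, r • w⟫ = 0 := by
    rw [real_inner_smul_left, real_inner_smul_right, hvw]; simp
  have hsq : 0 < √δ := Real.sqrt_pos.2 hδ
  have hsq2 : √δ ^ 2 = δ := Real.sq_sqrt hδ.le
  have hsq1 : √δ ≤ 1 := Real.sqrt_le_one.2 hδ1
  have hN0 : 0 ≤ r * (‖vN x p v‖ / (2 * δ)) := by positivity
  have hT0 : 0 ≤ r * (‖vT x p v‖ / √δ) := by positivity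
  have hN : r * ‖vN x p v‖ ≤ 2 * a * δ := by
    have h1 : r * (‖vN x p v‖ / (2 * δ)) ≤ a := by linarith
    have h2 := mul_le_mul_of_nonneg_right h1 (show 0 ≤ 2 * δ by positivity)
    have h3 : r * (‖vN x p v‖ / (2 * δ)) * (2 * δ) = r * ‖vN x p v‖ := by field_simp
    linarith
  have hT : r * ‖vT x p v‖ ≤ a * √δ := by
    have h1 : r * (‖vT x p v‖ / √δ) ≤ a := by linarith
    have h2 := mul_le_mul_of_nonneg_right h1 hsq.le
    have h3 : r * (‖vT x p v‖ / √δ) * √δ = r * ‖vT x p v‖ := by field_simp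
    linarith
  have hδsq : δ ≤ √δ := by nlinarith
  have hv : ‖r • v‖ ≤ 3 * a * √δ := by
    rw [norm_smul, Real.norm_eq_abs, abs_of_pos hr]
    have h1 := mul_le_mul_of_nonneg_left (norm_le_vN_add_vT x p v) hr.le
    have h2 := mul_le_mul_of_nonneg_left hδsq ha.le
    linarith
  refine ⟨affineDisc x (r • v) (r • w), conformalHarmonicOnDisk_affineDisc x hab hin,
    fun z hz => ?_, by simp [affineDisc], by rw [pd_zero_affineDisc]⟩
  set Y := z 0 • r • v + z 1 • r • w with hY
  have hY2 : ‖Y‖ ^ 2 ≤ ‖r • v‖ ^ 2 := norm_smul_add_smul_sq_le hab hin hz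
  have hYn : ‖Y‖ ≤ 3 * a * √δ := (le_of_sq_le_sq hY2 (norm_nonneg _)).trans hv
  have hfz : affineDisc x (r • v) (r • w) z = p + (Y - δ • nvec x p) := by
    rw [affineDisc, ← hY, sub_eq_add_neg Y, ← hx]; abel
  rw [hfz]
  refine hB.neg_of_close hp hup hn hdu hδ hδρ hδM ?_ ?_ ?_
  · have h1 : ⟪nvec x p, Y⟫ = z 0 * (r * ⟪nvec x p, v⟫) := by
      rw [hY, inner_add_right]; simp only [real_inner_smul_right, hnw]; ring
    have hz0 : |z 0| ≤ 1 := by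
      have h2 := PiLp.norm_apply_le z 0
      have h3 : ‖z‖ < 1 := by simpa [unitDisk] using hz
      rw [Real.norm_eq_abs] at h2
      linarith
    rw [norm_vN hn] at hN
    calc _ ≤ |⟪nvec x p, Y⟫| := le_abs_self _
      _ = |z 0| * (r * |⟪nvec x p, v⟫|) := by rw [h1, abs_mul, abs_mul, abs_of_pos hr]
      _ ≤ 1 * (r * |⟪nvec x p, v⟫|) := by gcongr
      _ ≤ δ / 4 := by nlinarith
  · have h1 : ‖Y‖ ^ 2 ≤ (3 * a * √δ) ^ 2 := by gcongr
    rw [mul_pow, hsq2] at h1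
    have h2 := mul_le_mul_of_nonneg_left h1 (show 0 ≤ 8 * M by have := hB.M_pos; positivity)
    have h3 := mul_le_mul_of_nonneg_right haM hδ.le
    linarith
  · nlinarith

end MinMet

end

/-- Boundary estimates for the minimal metric of a bounded strongly
minimally convex domain: `g_D(x,v) ≍ ‖v_N‖/(2δ_D(x)) + ‖v_T‖/δ_D(x)^{1/2}` near `∂D`,
where `p = π(x)` is the (unique) nearest boundary point of `x`. -/
theorem minimal_metric_boundary_estimates
    (d : ℕ) (hd : 3 ≤ d) (D : Set (Euc d)) (hD : IsStronglyMinimallyConvex D) :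
    ∃ ε : ℝ, 0 < ε ∧ ε < 1 ∧ ∃ A : ℝ, 1 ≤ A ∧
      ∀ x ∈ D, Metric.infDist x (frontier D) < ε →
        ∀ p ∈ frontier D, dist x p = Metric.infDist x (frontier D) →
          ∀ v : Euc d,
            A⁻¹ * (‖vN x p v‖ / (2 * Metric.infDist x (frontier D))
                + ‖vT x p v‖ / Real.sqrt (Metric.infDist x (frontier D)))
              ≤ minMetric D x v ∧
            minMetric D x v ≤
              A * (‖vN x p v‖ / (2 * Metric.infDist x (frontier D))
                + ‖vT x p v‖ / Real.sqrt (Metric.infDist x (frontier D))) := by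
  obtain ⟨hDo, -, hDb, U, u, hU, hfU, hu, hDU, hfr, hdu, hess⟩ := hD
  have hcpt : IsCompact (frontier D) :=
    Metric.isCompact_of_isClosed_isBounded isClosed_frontier
      (hDb.closure.subset frontier_subset_closure)
  have hess' : ∀ x ∈ U, ∀ v w : Euc d, ‖v‖ = 1 → ‖w‖ = 1 → ⟪v, w⟫ = 0 →
      0 < fderiv ℝ (fderiv ℝ u) x v v + fderiv ℝ (fderiv ℝ u) x w w := by
    intro x hx v w hv hw hvw
    have h := hess x hx v w hv hw hvw
    have hc := hu.contDiffAt (hU.mem_nhds hx)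
    rwa [hessQ, hessQ, MinMet.fderiv_fderiv_apply hc, MinMet.fderiv_fderiv_apply hc] at h
  obtain ⟨ρ, c₀, M, κ, hB, hρU⟩ := MinMet.exists_uniformBounds hcpt hU hfU hu hdu hess'
  have hρ := hB.ρ_pos
  have hc₀ := hB.c₀_pos
  have hM := hB.M_pos
  have hκ := hB.κ_pos
  obtain ⟨B₀, hB₀⟩ := Metric.isBounded_iff.1 hDb
  set B := max B₀ 1 with hBdef
  have hBp : 0 < B := by positivity
  -- size of the affine discs in the upper bound
  set a := min (1 / 8) (min (ρ / 6) (√(c₀ / (72 * M)))) with ha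
  have hap : 0 < a := by positivity
  have ha8 : a ≤ 1 / 8 := min_le_left _ _
  have haρ : 3 * a ≤ ρ / 2 := by
    have : a ≤ ρ / 6 := (min_le_right _ _).trans (min_le_left _ _)
    linarith
  have haM : 8 * M * (3 * a) ^ 2 ≤ c₀ := by
    have h1 : a ≤ √(c₀ / (72 * M)) := (min_le_right _ _).trans (min_le_right _ _)
    have h2 : a ^ 2 ≤ c₀ / (72 * M) := by
      rw [← Real.sq_sqrt (show 0 ≤ c₀ / (72 * M) by positivity)]
      gcongr
    rw [le_div_iff₀ (by positivity)] at h2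
    linarith
  -- radius of the subdisc on which every competitor stays near the boundary point
  set s := min (1 / 2) (ρ / (8 * B)) with hs
  have hsp : 0 < s := by positivity
  have hs2 : s ≤ 1 / 2 := min_le_left _ _
  have hsB : 4 * B * s ≤ ρ / 2 := by
    have h1 : s ≤ ρ / (8 * B) := min_le_right _ _
    rw [le_div_iff₀ (by positivity)] at h1
    linarith
  set C₁ := 4 * (1 + 2 * M / c₀) / s + 8 * (2 * M / c₀) / (κ * s) * (2 * M) with hC₁
  have hC₁p : 0 < C₁ := by positivity
  set C₂ := √(16 * M / (κ * s ^ 2)) with hC₂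
  set A := max 1 (max (1 / a) (C₁ / 2 + C₂)) with hA
  have hA1 : 1 ≤ A := le_max_left _ _
  have hAa : 1 / a ≤ A := (le_max_left _ _).trans (le_max_right _ _)
  have hAC : C₁ / 2 + C₂ ≤ A := (le_max_right _ _).trans (le_max_right _ _)
  refine ⟨min (1 / 2) (min (ρ / 2) (c₀ / (8 * M))), by positivity,
    (min_le_left _ _).trans_lt (by norm_num), A, hA1, ?_⟩
  intro x hxD hxε p hp hxp v
  rw [← hxp] at hxε
  have hnormal := MinMet.fderiv_eq_normal hDo hU hDU hfr hxD hp hxp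
    ((hB.contDiffAt p hp p (mem_closedBall_self hρ.le)).differentiableAt (by norm_num))
  rw [← hxp]
  set δ := dist x p with hδdef
  have hne : x ≠ p := by
    rintro rfl
    exact (hDo.frontier_eq ▸ hp).2 hxD
  have hδ : 0 < δ := dist_pos.2 hne
  have hδ1 : δ ≤ 1 := by
    have := hxε.trans_le (min_le_left _ _)
    linarith
  have hδρ : δ ≤ ρ / 2 := (hxε.trans_le ((min_le_right _ _).trans (min_le_left _ _))).le
  have hδM : 8 * M * δ ≤ c₀ := by
    have := (hxε.trans_le ((min_le_right _ _).trans (min_le_right _ _))).le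
    rw [le_div_iff₀ (by positivity)] at this
    linarith
  have hup : u p = 0 := by rw [hfr] at hp; exact hp.2
  have hpx : ‖p - x‖ = δ := by rw [hδdef, dist_comm, dist_eq_norm]
  have hn : ‖nvec x p‖ = 1 := by
    rw [nvec, norm_smul, norm_inv, norm_norm, hpx, inv_mul_cancel₀ hδ.ne']
  have hx : x - p = -(δ • nvec x p) := by
    rw [nvec, hpx, smul_smul, mul_inv_cancel₀ hδ.ne', one_smul]; abel
  have hdu' : ∀ v, fderiv ℝ u p v = ‖fderiv ℝ u p‖ * ⟪nvec x p, v⟫ := hnormal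
  set F := ‖vN x p v‖ / (2 * δ) + ‖vT x p v‖ / √δ with hF
  have hF0 : 0 ≤ F := by positivity
  have hdisc : ∀ r : ℝ, 0 < r → r * F ≤ a → 1 / r ∈ {c : ℝ | ∃ r : ℝ, 0 < r ∧ c = 1 / r ∧
      ∃ f : Euc 2 → Euc d, ConformalHarmonicOnDisk f ∧ (∀ z ∈ unitDisk, f z ∈ D) ∧
      f 0 = x ∧ pd 0 f 0 = r • v} := by
    intro r hr hrF
    obtain ⟨f, hf, hfD, hf0, hf1⟩ := hB.exists_disc hd hp hup hn hdu' hδ hx hδ1 hδρ hδM hap ha8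
      haM haρ hr hrF
    refine ⟨r, hr, rfl, f, hf, fun z hz => ?_, hf0, hf1⟩
    have h1 : f z ∈ D ∩ U := by
      rw [hDU]
      exact ⟨hρU p hp (hfD z hz).1, (hfD z hz).2⟩
    exact h1.1
  constructor
  · refine le_csInf ⟨_, hdisc (a / (F + 1)) (by positivity) ?_⟩ ?_
    · rw [div_mul_eq_mul_div, div_le_iff₀ (by positivity)]
      nlinarith
    · rintro _ ⟨r, hr, rfl, f, hf, hfD, hf0, hf1⟩
      have hmem : ∀ z ∈ ball (0 : ℂ) 1, f (MinMet.planeIso z) ∈ D := fun z hz =>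
        hfD _ (by simpa [unitDisk] using hz)
      have hg0 : (f ∘ MinMet.planeIso) 0 = x := by simp [hf0]
      have hg1 : fderiv ℝ (f ∘ MinMet.planeIso) 0 1 = r • v := by
        rw [MinMet.fderiv_comp_planeIso, MinMet.planeIso_one, map_zero, ← hf1, pd]
      obtain ⟨hb1, hb2⟩ := hB.disc_bounds hp hup hn hdu' hδ hδρ hδ1 hf.chDisk (by rw [hg0, hx])
        hBp (fun z hz => by
          rw [hg0, ← dist_eq_norm]
          exact (hB₀ (hmem z hz) hxD).trans (le_max_left _ _)) hsp hs2 hsB (fun z hz hzp => by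
          have h1 : f (MinMet.planeIso z) ∈ D ∩ U := ⟨hmem z hz, hρU p hp hzp⟩
          rw [hDU] at h1
          exact h1.2.le)
      rw [hg1] at hb1 hb2
      rw [← hC₁, real_inner_smul_right, abs_mul, abs_of_pos hr, ← MinMet.norm_vN hn] at hb2
      have hT : r * ‖vT x p v‖ ≤ C₂ * √δ := by
        have h1 : r * ‖vT x p v‖ ≤ ‖r • v‖ := by
          rw [norm_smul, Real.norm_eq_abs, abs_of_pos hr]
          exact mul_le_mul_of_nonneg_left (MinMet.norm_vT_le hn v) hr.le
        refine h1.trans ?_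
        rw [hC₂, ← Real.sqrt_mul (by positivity)]
        refine Real.le_sqrt_of_sq_le ?_
        rw [div_mul_eq_mul_div, le_div_iff₀ (by positivity)]
        linarith
      have hrF : r * F ≤ A := by
        have h1 : r * F = r * ‖vN x p v‖ / (2 * δ) + r * ‖vT x p v‖ / √δ := by
          rw [hF]; ring
        have hsq : 0 < √δ := Real.sqrt_pos.2 hδ
        have h2 : r * ‖vN x p v‖ / (2 * δ) ≤ C₁ / 2 := by
          rw [div_le_iff₀ (by positivity)]; linarith
        have h3 : r * ‖vT x p v‖ / √δ ≤ C₂ := by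
          rwa [div_le_iff₀ hsq]
        linarith
      rw [inv_mul_le_iff₀ (by positivity), mul_one_div, le_div_iff₀ hr, mul_comm]
      exact hrF
  · have hbdd : BddBelow {c : ℝ | ∃ r : ℝ, 0 < r ∧ c = 1 / r ∧
        ∃ f : Euc 2 → Euc d, ConformalHarmonicOnDisk f ∧ (∀ z ∈ unitDisk, f z ∈ D) ∧
        f 0 = x ∧ pd 0 f 0 = r • v} := by
      refine ⟨0, ?_⟩
      rintro _ ⟨r, hr, rfl, -⟩
      positivity
    have hle : ∀ r : ℝ, 0 < r → r * F ≤ a → minMetric D x v ≤ 1 / r := fun r hr hrF =>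
      csInf_le hbdd (hdisc r hr hrF)
    -- `F` may vanish (when `v = 0`), so compare with `F + t` for every `t > 0`
    refine le_of_forall_pos_le_add fun t ht => ?_
    have h1 := hle (a / (F + a * t)) (by positivity) (by
      rw [div_mul_eq_mul_div, div_le_iff₀ (by positivity)]
      have : 0 < a * t := by positivity
      nlinarith)
    have h2 : 1 / (a / (F + a * t)) = 1 / a * F + t := by field_simp
    rw [h2] at h1
    have h3 := mul_le_mul_of_nonneg_right hAa hF0
    linarith
end
end

section
/- Let d ≥ 2 and let D ⊂ ℝ^d be a bounded domain with C² boundary, and let ε ∈ (0,1) be small enough that the nearest-point projection π is well defined on N_ε(∂D) and the tangential comparison (1/2)‖γ̇_T‖ ≤ ‖(π∘γ)'‖ ≤ 2‖γ̇_T‖ holds there. Set N := closure(N_ε(∂D)) ∩ D, h(x) := δ_D(x)^{1/2}, and for a piecewise C¹ curve γ : [0,1] → N define ℓ(γ) := ∫₀¹ (‖(γ̇(t))_N‖/(2δ_D(γ(t))) + ‖(γ̇(t))_T‖/δ_D(γ(t))^{1/2}) dt. Then for every piecewise C¹ curve γ : [0,1] → N with endpoints x = γ(0) and y = γ(1): ℓ(γ)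 ≥ |log(h(y)/h(x))| + H(π(x),π(y))/(2 h_γ), where h_γ := max_{t∈[0,1]} h(γ(t)). Moreover, if γ is a straight line segment contained in the normal fiber π^{-1}(ξ) for some ξ ∈ ∂D, then ℓ(γ) = |log(h(y)/h(x))|. -/
/-!
The main point is that `π ∘ γ` is again a piecewise `C¹` curve when `γ` is one in the inner tube
(`TubeData.contDiffOn_proj_comp`); the estimates then follow by integration.

Let `u` be a defining function of `D`. By Lagrange multipliers `x = π(x) - s ∇u(π(x))` for some `s`,
so `(π(x), s)` solves `G(q, r) = (x, 0)` for the `C¹` map `G(q, r) = (q - r ∇u(q), u(q))`. As `π` is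
continuous by compactness of `∂D`, the inverse function theorem makes `π` the restriction of a `C¹`
map near `x` as soon as `dG` is injective at `(π(x), s)` (`TubeData.exists_local_smooth`).
Injectivity is a consequence of the tangential comparison (`TubeData.injective_dG`): a kernel vector
`(w, σ)` of `dG` at `x` would force the derivative of `π` at the points `π(x) + θ (x - π(x))` to
multiply the tangent vector `w` by `1 / (1 - θ)`. For all but finitely many `θ` in `(1/2, 1)` the map
`dG` is injective at these points, so that the derivative exists, and the factor exceeds `2`.

Since `π ∘ γ` is tangent to `∂D`, the derivative of `δ_D ∘ γ` is `-⟨γ̇, n⟩`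
(`TubeData.hasDerivAt_infDist`). Hence `½ log δ_D` changes along `γ` by at most the integral of
`‖γ̇_N‖ / (2δ_D)`. The comparison `‖(π ∘ γ)'‖ ≤ 2 ‖γ̇_T‖` and `δ_D^{1/2} ≤ h_γ` bound the
tangential part of the length from below by the length of `π ∘ γ` divided by `2 h_γ`. On a normal
fiber the tangential part vanishes and `δ_D` is `|s|` up to a constant factor, with `s` affine and
nonvanishing; so `½ log δ_D` is monotone and the length equals its total change
(`TubeData.fiber_length`).
-/

open scoped RealInnerProductSpace ENNReal
open Metric Set Filter

noncomputable section

open scoped Topology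

/-! ### The tube around the boundary -/

/-- Local description of the tube `{δ_D ≤ ε}` around `∂D`: nearest points are unique and given by
`π`, and near each boundary point `∂D` is the zero set of `u`, whose gradient `g` is `C¹` and does
not vanish on `∂D`. -/
structure TubeData {d : ℕ} (D : Set (Euc d)) (ε : ℝ) (π : Euc d → Euc d)
    (u : Euc d → ℝ) (g : Euc d → Euc d) : Prop where
  isOpen : IsOpen D
  compact : IsCompact (frontier D)
  proj : ∀ x : Euc d, Metric.infDist x (frontier D) ≤ ε →
      π x ∈ frontier D ∧ dist x (π x) = Metric.infDist x (frontier D) ∧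
      ∀ q ∈ frontier D, dist x q = Metric.infDist x (frontier D) → q = π x
  contDiff_u : ∀ p ∈ frontier D, ContDiffAt ℝ 1 u p
  grad : ∀ p ∈ frontier D, HasFDerivAt u (innerSL ℝ (g p)) p
  contDiff_g : ∀ p ∈ frontier D, ContDiffAt ℝ 1 g p
  zero_iff : ∀ p ∈ frontier D, ∀ᶠ q in 𝓝 p, (q ∈ frontier D ↔ u q = 0)
  ne_zero : ∀ p ∈ frontier D, g p ≠ 0

theorem exists_tubeData {d : ℕ} {D : Set (Euc d)} (hD : IsC2BoundedDomain D)
    {ε : ℝ} {π : Euc d → Euc d}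
    (hπ : ∀ x : Euc d, Metric.infDist x (frontier D) ≤ ε →
      π x ∈ frontier D ∧ dist x (π x) = Metric.infDist x (frontier D) ∧
      ∀ q ∈ frontier D, dist x q = Metric.infDist x (frontier D) → q = π x) :
    ∃ u g, TubeData D ε π u g := by
  obtain ⟨ho, -, hb, U, u, hU, hFU, hu, -, hF, hne⟩ := hD
  have hu2 : ∀ p ∈ frontier D, ContDiffAt ℝ 2 u p := fun p hp =>
    hu.contDiffAt (hU.mem_nhds (hFU hp))
  refine ⟨u, fun q => (InnerProductSpace.toDual ℝ (Euc d)).symm (fderiv ℝ u q), ho, ?_, hπ,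
    fun p hp => (hu2 p hp).of_le (by norm_num), ?_, ?_, ?_, ?_⟩
  · exact Metric.isCompact_of_isClosed_isBounded isClosed_frontier
      (hb.closure.subset frontier_subset_closure)
  · intro p hp
    have h := ((hu2 p hp).differentiableAt (by norm_num)).hasFDerivAt
    have h2 : (innerSL ℝ ((InnerProductSpace.toDual ℝ (Euc d)).symm (fderiv ℝ u p)) :
        Euc d →L[ℝ] ℝ) = fderiv ℝ u p := by
      ext1 v
      simp
    rw [h2]
    exact h
  · intro p hp
    exact (LinearIsometryEquiv.contDiff _).contDiffAt.comp p
      ((hu2 p hp).fderiv_right (m := 1) (by norm_num))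
  · intro p hp
    filter_upwards [hU.mem_nhds (hFU hp)] with q hq
    rw [hF]
    simp [hq]
  · intro p hp h
    exact hne p hp (by simpa using h)

namespace TubeData

variable {d : ℕ} {D : Set (Euc d)} {ε : ℝ} {π : Euc d → Euc d} {u : Euc d → ℝ}
  {g : Euc d → Euc d}

/-- The signed parameter `s` for which `x = π(x) - s ∇u(π(x))`. -/
def param (π g : Euc d → Euc d) (x : Euc d) : ℝ := ⟪g (π x), π x - x⟫ / ‖g (π x)‖ ^ 2

/-- Lagrange multipliers: a point of the tube lies on the normal line through its nearest
boundary point. -/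
theorem eq_sub_param (T : TubeData D ε π u g) {x : Euc d}
    (hx : Metric.infDist x (frontier D) ≤ ε) : x = π x - param π g x • g (π x) := by
  obtain ⟨hp, hdist, -⟩ := T.proj x hx
  have hgn := T.ne_zero _ hp
  have hu0 : u (π x) = 0 := ((T.zero_iff _ hp).self_of_nhds).1 hp
  have hext : IsLocalExtrOn (fun q => ‖q - x‖ ^ 2) {q | u q = u (π x)} (π x) := by
    left
    have : ∀ᶠ q in 𝓝[{q | u q = u (π x)}] (π x), (q ∈ frontier D ↔ u q = 0) :=
      nhdsWithin_le_nhds (T.zero_iff _ hp)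
    filter_upwards [this, self_mem_nhdsWithin] with q hq hq'
    have hqF : q ∈ frontier D := hq.2 (by rw [← hu0]; exact hq')
    have := Metric.infDist_le_dist_of_mem (x := x) hqF
    rw [← hdist, dist_comm, dist_comm x q, dist_eq_norm, dist_eq_norm] at this
    gcongr
  have hφ : HasStrictFDerivAt (fun q : Euc d => ‖q - x‖ ^ 2)
      (2 • (innerSL ℝ (π x - x)).comp (ContinuousLinearMap.id ℝ (Euc d))) (π x) := by
    exact (hasStrictFDerivAt_norm_sq _).comp (π x) ((hasStrictFDerivAt_id _).sub_const x)
  have hf : HasStrictFDerivAt u (innerSL ℝ (g (π x))) (π x) :=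
    (T.contDiff_u _ hp).hasStrictFDerivAt' (T.grad _ hp) (by norm_num)
  obtain ⟨a, b, hab, h⟩ := hext.exists_multipliers_of_hasStrictFDerivAt_1d hf hφ
  have hv : a • g (π x) + (2 * b) • (π x - x) = 0 := by
    apply ext_inner_right ℝ
    intro v
    have := DFunLike.congr_fun h v
    simp only [add_apply, smul_apply,
      innerSL_apply_apply, ContinuousLinearMap.comp_apply, ContinuousLinearMap.id_apply,
      zero_apply, smul_eq_mul, nsmul_eq_mul, Nat.cast_ofNat] at this
    rw [inner_add_left, inner_smul_left, inner_smul_left, inner_zero_left]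
    simp only [conj_trivial]
    linarith
  have hb : b ≠ 0 := by
    rintro rfl
    have ha : a ≠ 0 := fun ha => hab (by simp [ha])
    simp [ha, hgn] at hv
  have hv2 : π x - x = (-(a / (2 * b))) • g (π x) := by
    have : (2 * b) • (π x - x) = -(a • g (π x)) := (neg_eq_of_add_eq_zero_right hv).symm
    have h2b : 2 * b ≠ 0 := by positivity
    rw [← inv_smul_smul₀ h2b (π x - x), this, smul_neg, smul_smul, ← neg_smul]
    congr 1
    field_simp
  have hpar : param π g x = -(a / (2 * b)) := by
    have : ‖g (π x)‖ ≠ 0 := by simpa using hgn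
    rw [param, hv2, inner_smul_right, real_inner_self_eq_norm_sq]
    field_simp
  rw [hpar, ← hv2]
  simp

theorem continuousWithinAt_proj (T : TubeData D ε π u g) {x : Euc d}
    (hx : Metric.infDist x (frontier D) ≤ ε) :
    ContinuousWithinAt π {y | Metric.infDist y (frontier D) ≤ ε} x := by
  apply T.compact.tendsto_nhds_of_unique_mapClusterPt
  · filter_upwards [self_mem_nhdsWithin] with y hy using (T.proj y hy).1
  · intro q hq hcl
    refine (T.proj x hx).2.2 q hq ?_
    obtain ⟨V, hV, hVq⟩ := mapClusterPt_iff_ultrafilter.1 hcl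
    have hVx : Tendsto id (V : Filter (Euc d)) (𝓝 x) := hV.trans nhdsWithin_le_nhds
    refine tendsto_nhds_unique_of_eventuallyEq (hVx.dist hVq)
      (((Metric.continuous_infDist_pt _).tendsto x).comp hVx) ?_
    filter_upwards [hV self_mem_nhdsWithin] with y hy using (T.proj y hy).2.1

theorem continuousWithinAt_param (T : TubeData D ε π u g) {x : Euc d}
    (hx : Metric.infDist x (frontier D) ≤ ε) :
    ContinuousWithinAt (param π g) {y | Metric.infDist y (frontier D) ≤ ε} x := by
  have hp := (T.proj x hx).1
  have hπ := T.continuousWithinAt_proj hx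
  have hg : ContinuousWithinAt (fun y => g (π y)) {y | Metric.infDist y (frontier D) ≤ ε} x :=
    (T.contDiff_g _ hp).continuousAt.comp_continuousWithinAt hπ
  unfold param
  refine ContinuousWithinAt.div (ContinuousWithinAt.inner hg (hπ.sub continuousWithinAt_id)) (hg.norm.pow 2) ?_
  simpa using T.ne_zero _ hp

/-! ### Local smoothness of the projection -/

/-- The derivative of `G (q, r) = (q - r ∇u(q), u(q))` at `(p, s)`. -/
def dG (g : Euc d → Euc d) (p : Euc d) (s : ℝ) : (Euc d × ℝ) →L[ℝ] (Euc d × ℝ) :=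
  (ContinuousLinearMap.fst ℝ (Euc d) ℝ
    - (s • (fderiv ℝ g p).comp (ContinuousLinearMap.fst ℝ (Euc d) ℝ)
        + (ContinuousLinearMap.snd ℝ (Euc d) ℝ).smulRight (g p))).prod
    ((innerSL ℝ (g p)).comp (ContinuousLinearMap.fst ℝ (Euc d) ℝ))

theorem dG_apply (p : Euc d) (s : ℝ) (w : Euc d) (σ : ℝ) :
    dG g p s (w, σ) = (w - (s • fderiv ℝ g p w + σ • g p), ⟪g p, w⟫) := by
  simp [dG]

/-- Where `dG` is injective, the inverse function theorem extends `π` locally to a `C¹` map `φ`,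
whose derivative is read off from `dG⁻¹`. -/
theorem exists_local_smooth (T : TubeData D ε π u g) {x : Euc d}
    (hx : Metric.infDist x (frontier D) ≤ ε)
    (hinj : Function.Injective (dG g (π x) (param π g x))) :
    ∃ φ : Euc d → Euc d, ContDiffAt ℝ 1 φ x ∧
      (∀ᶠ y in 𝓝[{y | Metric.infDist y (frontier D) ≤ ε}] x, π y = φ y) ∧
      ∀ v w σ, dG g (π x) (param π g x) (w, σ) = (v, 0) → fderiv ℝ φ x v = w := by
  set p := π x with hpdef
  set s := param π g x with hs
  have hp : p ∈ frontier D := (T.proj x hx).1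
  set G : Euc d × ℝ → Euc d × ℝ := fun z => (z.1 - z.2 • g z.1, u z.1) with hG
  have hGx : G (p, s) = (x, 0) := by
    have h1 : p - s • g p = x := (T.eq_sub_param hx).symm
    have h2 : u p = 0 := ((T.zero_iff _ hp).self_of_nhds).1 hp
    simp [hG, h1, h2]
  have hgC : ContDiffAt ℝ 1 (fun z : Euc d × ℝ => g z.1) (p, s) :=
    (T.contDiff_g p hp).comp (p, s) contDiffAt_fst
  have hGC : ContDiffAt ℝ 1 G (p, s) :=
    (contDiffAt_fst.sub (contDiffAt_snd.smul hgC)).prodMk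
      ((T.contDiff_u p hp).comp (p, s) contDiffAt_fst)
  have hGd : HasFDerivAt G (dG g p s) (p, s) := by
    have h1 : HasFDerivAt (fun z : Euc d × ℝ => g z.1)
        ((fderiv ℝ g p).comp (ContinuousLinearMap.fst ℝ (Euc d) ℝ)) (p, s) :=
      HasFDerivAt.comp (p, s) (f := Prod.fst) (g := g)
        ((T.contDiff_g p hp).differentiableAt (by norm_num)).hasFDerivAt hasFDerivAt_fst
    have h2 : HasFDerivAt (fun z : Euc d × ℝ => u z.1)
        ((innerSL ℝ (g p)).comp (ContinuousLinearMap.fst ℝ (Euc d) ℝ)) (p, s) :=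
      HasFDerivAt.comp (p, s) (f := Prod.fst) (g := u) (T.grad p hp) hasFDerivAt_fst
    exact (hasFDerivAt_fst.sub (hasFDerivAt_snd.smul h1)).prodMk h2
  let e : (Euc d × ℝ) ≃L[ℝ] (Euc d × ℝ) :=
    (LinearEquiv.ofInjectiveEndo (dG g p s : (Euc d × ℝ) →ₗ[ℝ] (Euc d × ℝ)) hinj).toContinuousLinearEquiv
  have he : (e : (Euc d × ℝ) →L[ℝ] (Euc d × ℝ)) = dG g p s := by
    ext z <;> rfl
  have hGd' : HasFDerivAt G (e : (Euc d × ℝ) →L[ℝ] (Euc d × ℝ)) (p, s) := he ▸ hGd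
  have hst := hGC.hasStrictFDerivAt' hGd' (by norm_num)
  have hinv := hGC.to_localInverse hGd' (by norm_num)
  have hinvd := hst.to_localInverse
  have hleft := hst.eventually_left_inverse
  change ContDiffAt ℝ 1 (hst.localInverse G e (p, s)) _ at hinv
  set I := hst.localInverse G e (p, s) with hI
  rw [hGx] at hinv hinvd
  refine ⟨fun y => (I (y, 0)).1, ?_, ?_, ?_⟩
  · exact contDiffAt_fst.comp x (hinv.comp x (contDiffAt_id.prodMk contDiffAt_const))
  · have ht : Tendsto (fun y => (π y, param π g y))
        (𝓝[{y | Metric.infDist y (frontier D) ≤ ε}] x) (𝓝 (p, s)) :=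
      (T.continuousWithinAt_proj hx).prodMk_nhds (T.continuousWithinAt_param hx)
    filter_upwards [ht.eventually hleft, self_mem_nhdsWithin] with y hy hyN
    have hpy := (T.proj y hyN).1
    have h1 : G (π y, param π g y) = (y, 0) := by
      have h1 := (T.eq_sub_param hyN).symm
      have h2 : u (π y) = 0 := ((T.zero_iff _ hpy).self_of_nhds).1 hpy
      simp [hG, h1, h2]
    rw [h1] at hy
    rw [hy]
  · intro v w σ h
    have hd : HasFDerivAt (fun y : Euc d => (I (y, 0)).1)
        ((ContinuousLinearMap.fst ℝ (Euc d) ℝ).comp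
          ((e.symm : (Euc d × ℝ) →L[ℝ] (Euc d × ℝ)).comp
            ((ContinuousLinearMap.id ℝ (Euc d)).prod 0))) x := by
      have h0 : HasFDerivAt (fun y : Euc d => (y, (0:ℝ)))
          ((ContinuousLinearMap.id ℝ (Euc d)).prod 0) x :=
        (hasFDerivAt_id x).prodMk (hasFDerivAt_const _ _)
      exact hasFDerivAt_fst.comp x (HasFDerivAt.comp x (g := I) hinvd.hasFDerivAt h0)
    rw [hd.fderiv]
    have : e (w, σ) = (v, 0) := h
    have h3 : e.symm (v, 0) = (w, σ) := by rw [← this]; simp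
    simp [h3]

end TubeData

/-! ### Absence of focal points -/

/-- The tangential comparison `½‖γ̇_T‖ ≤ ‖(π∘γ)'‖ ≤ 2‖γ̇_T‖` for `C¹` curves in the inner tube. -/
def TangentialComparison {d : ℕ} (D : Set (Euc d)) (ε : ℝ) (π : Euc d → Euc d) : Prop :=
  ∀ γ : ℝ → Euc d, ContDiffOn ℝ 1 γ (Set.Icc 0 1) →
    (∀ t ∈ Set.Icc (0:ℝ) 1, γ t ∈ D ∧ Metric.infDist (γ t) (frontier D) ≤ ε) →
    ∀ t ∈ Set.Icc (0:ℝ) 1,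
      (1/2) * ‖vT (γ t) (π (γ t)) (derivWithin γ (Set.Icc 0 1) t)‖ ≤
        ‖derivWithin (fun s => π (γ s)) (Set.Icc 0 1) t‖ ∧
      ‖derivWithin (fun s => π (γ s)) (Set.Icc 0 1) t‖ ≤
        2 * ‖vT (γ t) (π (γ t)) (derivWithin γ (Set.Icc 0 1) t)‖

theorem ball_infDist_frontier_subset {d : ℕ} {D : Set (Euc d)} (hD : IsOpen D) {x : Euc d}
    (hx : x ∈ D) : Metric.ball x (Metric.infDist x (frontier D)) ⊆ D := by
  have hpre : IsPreconnected (Metric.ball x (Metric.infDist x (frontier D))) :=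
    (convex_ball _ _).isPreconnected
  rcases le_or_gt (Metric.infDist x (frontier D)) 0 with h0 | h0
  · rw [Metric.ball_eq_empty.2 h0]
    exact empty_subset _
  have hsub : Metric.ball x (Metric.infDist x (frontier D)) ⊆ D ∪ (closure D)ᶜ := by
    intro y hy
    by_contra hcon
    have hy2 : y ∈ frontier D := by
      rw [hD.frontier_eq]
      simp only [mem_union, mem_compl_iff, not_or, not_not] at hcon
      exact ⟨hcon.2, hcon.1⟩
    have := Metric.infDist_le_dist_of_mem (x := x) hy2
    rw [Metric.mem_ball, dist_comm] at hy
    linarith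
  exact hpre.subset_left_of_subset_union hD isClosed_closure.isOpen_compl
    (disjoint_compl_right.mono_left subset_closure) hsub ⟨x, Metric.mem_ball_self h0, hx⟩

namespace TubeData

variable {d : ℕ} {D : Set (Euc d)} {ε : ℝ} {π : Euc d → Euc d} {u : Euc d → ℝ}
  {g : Euc d → Euc d}

theorem proj_notMem (T : TubeData D ε π u g) {x : Euc d}
    (hx : Metric.infDist x (frontier D) ≤ ε) : π x ∉ D := by
  have := (T.proj x hx).1
  rw [T.isOpen.frontier_eq] at this
  exact this.2

theorem infDist_pos (T : TubeData D ε π u g) {x : Euc d} (hxD : x ∈ D)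
    (hx : Metric.infDist x (frontier D) ≤ ε) : 0 < Metric.infDist x (frontier D) := by
  rw [← (T.proj x hx).2.1, dist_pos]
  rintro h
  exact T.proj_notMem hx (h ▸ hxD)

/-- On a normal line, `dG` degenerates only at finitely many parameters: a kernel vector is an
eigenvector of the tangential part of the Hessian, with eigenvalue the inverse parameter. -/
theorem exists_injective (T : TubeData D ε π u g) {p : Euc d} (hp : p ∈ frontier D) {s : ℝ}
    (hs : s ≠ 0) : ∃ θ ∈ Set.Ioo (1 / 2 : ℝ) 1, Function.Injective (dG g p (θ * s)) := by
  have hgn := T.ne_zero p hp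
  have hgn2 : ‖g p‖ ≠ 0 := by simpa using hgn
  let P : Euc d →L[ℝ] Euc d :=
    ContinuousLinearMap.id ℝ (Euc d) - ((‖g p‖ ^ 2)⁻¹ • innerSL ℝ (g p)).smulRight (g p)
  have hP : ∀ v, P v = v - ((‖g p‖ ^ 2)⁻¹ * ⟪g p, v⟫) • g p := by
    intro v
    simp [P]
  let A : Module.End ℝ (Euc d) := (P.comp (fderiv ℝ g p) : Euc d →L[ℝ] Euc d)
  have hfin : Set.Finite {θ : ℝ | A.HasEigenvalue (θ * s)⁻¹} := by
    refine Set.Finite.preimage ?_ A.finite_hasEigenvalue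
    intro a _ b _ hab
    exact mul_right_cancel₀ hs (inv_injective hab)
  obtain ⟨θ, hθ, hgood⟩ := ((Set.Ioo_infinite (by norm_num : (1 / 2 : ℝ) < 1)).sdiff hfin).nonempty
  refine ⟨θ, hθ, ?_⟩
  rw [injective_iff_map_eq_zero]
  rintro ⟨w, σ⟩ h
  rw [dG_apply, Prod.mk_eq_zero] at h
  obtain ⟨h1, h2⟩ := h
  have hr : θ * s ≠ 0 := mul_ne_zero (by linarith [hθ.1]) hs
  by_cases hw : w = 0
  · subst hw
    simpa [hgn] using h1
  · exfalso
    apply hgood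
    refine Module.End.hasEigenvalue_of_hasEigenvector (x := w) ⟨?_, hw⟩
    rw [Module.End.mem_eigenspace_iff]
    have h3 : fderiv ℝ g p w = (θ * s)⁻¹ • (w - σ • g p) := by
      rw [eq_inv_smul_iff₀ hr, eq_sub_iff_add_eq]
      exact (sub_eq_zero.1 h1).symm
    change P (fderiv ℝ g p w) = _
    have h4 : P w = w := by rw [hP, h2]; simp
    have h5 : P (g p) = 0 := by
      rw [hP, real_inner_self_eq_norm_sq, inv_mul_cancel₀ (by positivity)]; simp
    rw [h3, map_smul, map_sub, map_smul, h4, h5]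
    simp

/-- There are no focal points in the tube. If `dG` had a kernel vector `(w, σ)` at `x`, then at the
points `p + θ (x - p)` the derivative of `π` would stretch the tangent vector `w` by the factor
`1 / (1 - θ)`, which exceeds `2` for `θ > 1/2`. -/
theorem injective_dG (T : TubeData D ε π u g) (hc : TangentialComparison D ε π) {x : Euc d}
    (hxD : x ∈ D) (hx : Metric.infDist x (frontier D) ≤ ε) :
    Function.Injective (dG g (π x) (param π g x)) := by
  have hp := (T.proj x hx).1
  have hδ := (T.proj x hx).2.1
  have hδ0 := T.infDist_pos hxD hx
  have hxeq := T.eq_sub_param hx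
  set p := π x with hpdef
  set s := param π g x with hsdef
  have hgn := T.ne_zero p hp
  have hgn2 : ‖g p‖ ≠ 0 := by simpa using hgn
  have hs : s ≠ 0 := by
    intro h
    rw [h] at hxeq
    simp only [zero_smul, sub_zero] at hxeq
    rw [hxeq, dist_self, ← hxeq] at hδ
    linarith
  rw [injective_iff_map_eq_zero]
  rintro ⟨w, σ⟩ h
  rw [dG_apply, Prod.mk_eq_zero] at h
  obtain ⟨h1, h2⟩ := h
  by_cases hw : w = 0
  · subst hw
    simpa [hgn] using h1
  exfalso
  obtain ⟨θ, ⟨hθ1, hθ2⟩, hinj⟩ := T.exists_injective hp hs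
  set z : Euc d := p - (θ * s) • g p with hz
  have hxp : ‖x - p‖ = Metric.infDist x (frontier D) := by rw [← dist_eq_norm, hδ]
  have hxz : dist x z = (1 - θ) * Metric.infDist x (frontier D) := by
    have : x - z = (1 - θ) • (x - p) := by
      rw [hz, hxeq]
      module
    rw [dist_eq_norm, this, norm_smul, hxp, Real.norm_of_nonneg (by linarith)]
  have hzp : dist z p = θ * Metric.infDist x (frontier D) := by
    have : z - p = θ • (x - p) := by
      rw [hz, hxeq]
      module
    rw [dist_eq_norm, this, norm_smul, hxp, Real.norm_of_nonneg (by linarith)]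
  have hzD : z ∈ D := by
    apply ball_infDist_frontier_subset T.isOpen hxD
    rw [Metric.mem_ball, dist_comm, hxz]
    nlinarith
  have hzδ : Metric.infDist z (frontier D) = θ * Metric.infDist x (frontier D) := by
    apply le_antisymm
    · rw [← hzp]
      exact Metric.infDist_le_dist_of_mem hp
    · have := Metric.infDist_le_infDist_add_dist (s := frontier D) (x := x) (y := z)
      rw [hxz] at this
      linarith
  have hzε : Metric.infDist z (frontier D) < ε := by rw [hzδ]; nlinarith
  have hπz : π z = p := ((T.proj z hzε.le).2.2 p hp (by rw [hzp, hzδ])).symm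
  have hparz : param π g z = θ * s := by
    have : p - z = (θ * s) • g p := by rw [hz]; module
    rw [param, hπz, this, inner_smul_right, real_inner_self_eq_norm_sq]
    field_simp
  obtain ⟨φ, hφC, hφπ, hφd⟩ := T.exists_local_smooth hzε.le (by rw [hπz, hparz]; exact hinj)
  rw [hπz, hparz] at hφd
  have hφw : fderiv ℝ φ z ((1 - θ) • w) = w := by
    refine hφd _ _ (θ * σ) ?_
    rw [dG_apply, h2]
    congr 1
    have h3 : s • fderiv ℝ g p w = w - σ • g p := by
      rw [eq_sub_iff_add_eq]
      exact (sub_eq_zero.1 h1).symm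
    rw [mul_smul, h3]
    module
  -- a short straight curve from `z` in the direction `w`
  have hopen : IsOpen (D ∩ {y | Metric.infDist y (frontier D) < ε}) :=
    T.isOpen.inter (isOpen_lt (Metric.continuous_infDist_pt _) continuous_const)
  obtain ⟨ρ, hρ, hball⟩ := Metric.isOpen_iff.1 hopen z ⟨hzD, hzε⟩
  have hwn : 0 < ‖w‖ := norm_pos_iff.2 hw
  set c : ℝ := ρ / (2 * ‖w‖) with hcdef
  have hc0 : 0 < c := by positivity
  set v : Euc d := c • (1 - θ) • w with hv
  have hvn : ‖v‖ = c * ((1 - θ) * ‖w‖) := by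
    rw [hv, norm_smul, norm_smul, Real.norm_of_nonneg hc0.le, Real.norm_of_nonneg (by linarith)]
  have hcw : c * ‖w‖ = ρ / 2 := by rw [hcdef]; field_simp
  have hγN : ∀ t ∈ Set.Icc (0:ℝ) 1,
      z + t • v ∈ D ∧ Metric.infDist (z + t • v) (frontier D) ≤ ε := by
    intro t ht
    have : z + t • v ∈ Metric.ball z ρ := by
      rw [Metric.mem_ball, dist_eq_norm, add_sub_cancel_left, norm_smul, hvn,
        Real.norm_of_nonneg ht.1]
      have h4 : c * ((1 - θ) * ‖w‖) = (1 - θ) * (ρ / 2) := by rw [← hcw]; ring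
      rw [h4]
      have h5 : (1 - θ) * (ρ / 2) < ρ := by nlinarith
      have h6 : 0 ≤ (1 - θ) * (ρ / 2) := mul_nonneg (by linarith) (by linarith)
      nlinarith [ht.2, ht.1]
    have := hball this
    exact ⟨this.1, le_of_lt this.2⟩
  have hγd : HasDerivAt (fun t : ℝ => z + t • v) v 0 := by
    simpa using ((hasDerivAt_id (0:ℝ)).smul_const v).const_add z
  have huniq : UniqueDiffWithinAt ℝ (Set.Icc (0:ℝ) 1) 0 :=
    uniqueDiffOn_Icc one_pos 0 (by simp)
  have hmain := (hc (fun t => z + t • v) (by fun_prop) hγN 0 (by simp)).2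
  have hd1 : derivWithin (fun t : ℝ => z + t • v) (Set.Icc 0 1) 0 = v :=
    hγd.hasDerivWithinAt.derivWithin huniq
  have hd2 : derivWithin (fun t : ℝ => π (z + t • v)) (Set.Icc 0 1) 0 = c • w := by
    have hz0 : z = (fun t : ℝ => z + t • v) 0 := by simp
    have hφd' : HasFDerivAt φ (fderiv ℝ φ z) ((fun t : ℝ => z + t • v) 0) := by
      rw [← hz0]
      exact (hφC.differentiableAt (by norm_num)).hasFDerivAt
    have h7 : HasDerivAt (fun t : ℝ => φ (z + t • v)) (fderiv ℝ φ z v) 0 :=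
      hφd'.comp_hasDerivAt (0:ℝ) hγd
    have h8 : Tendsto (fun t : ℝ => z + t • v) (𝓝[Set.Icc 0 1] 0)
        (𝓝[{y | Metric.infDist y (frontier D) ≤ ε}] z) := by
      refine tendsto_nhdsWithin_iff.2 ⟨?_, ?_⟩
      · have := hγd.continuousAt.tendsto.mono_left
          (nhdsWithin_le_nhds (s := Set.Icc (0:ℝ) 1))
        simpa using this
      · filter_upwards [self_mem_nhdsWithin] with t ht using (hγN t ht).2
    have h9 : (fun t : ℝ => π (z + t • v)) =ᶠ[𝓝[Set.Icc 0 1] 0] fun t => φ (z + t • v) :=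
      h8.eventually hφπ
    rw [h9.derivWithin_eq_of_mem (by simp), h7.hasDerivWithinAt.derivWithin huniq, hv, map_smul,
      hφw]
  have hvT : vT z p v = v := by
    have h10 : ⟪v, nvec z p⟫ = 0 := by
      have : p - z = (θ * s) • g p := by rw [hz]; module
      rw [nvec, this, hv, inner_smul_right, inner_smul_right, inner_smul_left, inner_smul_left,
        real_inner_comm, h2]
      simp
    rw [vT, vN, h10]
    simp
  simp only [hd1, hd2, zero_smul, add_zero, hπz, hvT] at hmain
  rw [hvn, norm_smul, Real.norm_of_nonneg hc0.le] at hmain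
  have : 0 < c * ‖w‖ := by positivity
  nlinarith

/-- `π ∘ γ` is `C¹` wherever `γ` is a `C¹` curve in the inner tube. -/
theorem contDiffOn_proj_comp (T : TubeData D ε π u g) (hc : TangentialComparison D ε π)
    {γ : ℝ → Euc d} {s : Set ℝ} (hγ : ContDiffOn ℝ 1 γ s)
    (hN : ∀ t ∈ s, γ t ∈ D ∧ Metric.infDist (γ t) (frontier D) ≤ ε) :
    ContDiffOn ℝ 1 (fun t => π (γ t)) s := by
  intro t ht
  obtain ⟨φ, hφC, hφπ, -⟩ :=
    T.exists_local_smooth (hN t ht).2 (T.injective_dG hc (hN t ht).1 (hN t ht).2)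
  have h8 : Tendsto γ (𝓝[s] t) (𝓝[{y | Metric.infDist y (frontier D) ≤ ε}] (γ t)) := by
    refine tendsto_nhdsWithin_iff.2 ⟨(hγ t ht).continuousWithinAt, ?_⟩
    filter_upwards [self_mem_nhdsWithin] with t' ht' using (hN t' ht').2
  have h9 : (fun t => π (γ t)) =ᶠ[𝓝[s] t] fun t => φ (γ t) := h8.eventually hφπ
  exact (hφC.comp_contDiffWithinAt t (hγ t ht)).congr_of_eventuallyEq h9 (h9.self_of_nhdsWithin ht)

theorem continuousOn_proj_comp (T : TubeData D ε π u g)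
    {γ : ℝ → Euc d} {s : Set ℝ} (hγ : ContinuousOn γ s)
    (hN : ∀ t ∈ s, γ t ∈ D ∧ Metric.infDist (γ t) (frontier D) ≤ ε) :
    ContinuousOn (fun t => π (γ t)) s := by
  intro t ht
  exact (T.continuousWithinAt_proj (hN t ht).2).comp (hγ t ht) fun t' ht' => (hN t' ht').2

end TubeData

/-! ### Piecewise `C¹` curves -/

/-- A partition for a piecewise `C¹` curve, with breakpoints indexed by `ℕ`. -/
theorem PiecewiseC1On.exists_partition {d : ℕ} {γ : ℝ → Euc d} {α β : ℝ}
    (h : PiecewiseC1On γ α β) :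
    ∃ (n : ℕ) (a : ℕ → ℝ), Monotone a ∧ a 0 = α ∧ a n = β ∧
      ∀ k < n, ContDiffOn ℝ 1 γ (Set.Icc (a k) (a (k + 1))) := by
  obtain ⟨-, n, t, ht, h0, h1, hC⟩ := h
  refine ⟨n + 1, fun k => t ⟨min k (n + 1), by omega⟩, ?_, ?_, ?_, ?_⟩
  · intro i j hij
    exact ht (by simp only [Fin.mk_le_mk]; omega)
  · simpa using h0
  · rw [← h1]
    exact congrArg t (Fin.ext (by simp))
  · intro k hk
    have e1 : (⟨min k (n + 1), by omega⟩ : Fin (n + 2)) = (⟨k, hk⟩ : Fin (n + 1)).castSucc :=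
      Fin.ext (by simp; omega)
    have e2 : (⟨min (k + 1) (n + 1), by omega⟩ : Fin (n + 2)) = (⟨k, hk⟩ : Fin (n + 1)).succ :=
      Fin.ext (by simp; omega)
    simp only [e1, e2]
    exact hC ⟨k, hk⟩

/-- Off a finite set, each parameter of a piecewise `C¹` curve is interior to a `C¹` piece. -/
theorem PiecewiseC1On.exists_piece {d : ℕ} {γ : ℝ → Euc d} {α β : ℝ}
    (h : PiecewiseC1On γ α β) :
    ∃ S : Set ℝ, S.Finite ∧ ∀ t ∈ Set.Icc α β \ S, ∃ a b, t ∈ Set.Ioo a b ∧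
      Set.Icc a b ⊆ Set.Icc α β ∧ ContDiffOn ℝ 1 γ (Set.Icc a b) := by
  obtain ⟨n, a, ha, h0, h1, hC⟩ := h.exists_partition
  refine ⟨a '' Set.Iic n, (Set.finite_Iic n).image a, ?_⟩
  rintro t ⟨ht, htS⟩
  have hne : ∀ k ≤ n, a k ≠ t := fun k hk hk' => htS ⟨k, hk, hk'⟩
  have hex : ∃ k, t < a k :=
    ⟨n, lt_of_le_of_ne (by rw [h1]; exact ht.2) (hne n le_rfl).symm⟩
  classical
  have hfind := Nat.find_spec hex
  have hle : Nat.find hex ≤ n :=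
    Nat.find_min' hex (lt_of_le_of_ne (by rw [h1]; exact ht.2) (hne n le_rfl).symm)
  obtain ⟨j, hj⟩ : ∃ j, Nat.find hex = j + 1 := by
    refine Nat.exists_eq_succ_of_ne_zero fun h => ?_
    rw [h, h0] at hfind
    linarith [ht.1]
  rw [hj] at hfind hle
  have hj2 : a j ≤ t := not_lt.1 (Nat.find_min hex (by omega))
  refine ⟨a j, a (j + 1), ⟨lt_of_le_of_ne hj2 (hne j (by omega)), hfind⟩, ?_, hC j (by omega)⟩
  refine Set.Icc_subset_Icc ?_ ?_
  · rw [← h0]; exact ha (Nat.zero_le _)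
  · rw [← h1]; exact ha hle

/-- Integrability of continuous expressions in `t` and `γ̇(t)`; the values of `deriv γ` at the
breakpoints, possibly junk, are irrelevant. -/
theorem PiecewiseC1On.intervalIntegrable {d : ℕ} {γ : ℝ → Euc d} {α β : ℝ}
    (h : PiecewiseC1On γ α β) {Φ : ℝ → Euc d → ℝ}
    (hΦ : ContinuousOn (fun z : ℝ × Euc d => Φ z.1 z.2) (Set.Icc α β ×ˢ Set.univ)) :
    IntervalIntegrable (fun t => Φ t (deriv γ t)) MeasureTheory.volume α β := by
  obtain ⟨n, a, ha, h0, h1, hC⟩ := h.exists_partition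
  rw [← h0, ← h1]
  refine IntervalIntegrable.trans_iterate fun k hk => ?_
  rcases (ha (Nat.le_succ k)).eq_or_lt with heq | hlt
  · rw [Nat.succ_eq_add_one] at heq
    rw [← heq]
  rw [Nat.succ_eq_add_one] at hlt
  have hsub : Set.Icc (a k) (a (k + 1)) ⊆ Set.Icc α β := by
    refine Set.Icc_subset_Icc ?_ ?_
    · rw [← h0]; exact ha (Nat.zero_le _)
    · rw [← h1]; exact ha hk
  have hcont : ContinuousOn (fun t => Φ t (derivWithin γ (Set.Icc (a k) (a (k + 1))) t))
      (Set.Icc (a k) (a (k + 1))) := by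
    have hd := (hC k hk).continuousOn_derivWithin (uniqueDiffOn_Icc hlt) le_rfl
    exact hΦ.comp (continuousOn_id.prodMk hd) fun t ht => ⟨hsub ht, Set.mem_univ _⟩
  refine (hcont.intervalIntegrable_of_Icc hlt.le).congr_uIoo ?_
  intro t ht
  rw [Set.uIoo_of_le hlt.le] at ht
  simp only
  rw [derivWithin_of_mem_nhds (Icc_mem_nhds ht.1 ht.2)]

/-! ### Derivatives along a curve and the length estimates -/

namespace TubeData

variable {d : ℕ} {D : Set (Euc d)} {ε : ℝ} {π : Euc d → Euc d} {u : Euc d → ℝ}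
  {g : Euc d → Euc d}

theorem norm_nvec (T : TubeData D ε π u g) {x : Euc d} (hxD : x ∈ D)
    (hx : Metric.infDist x (frontier D) ≤ ε) : ‖nvec x (π x)‖ = 1 := by
  have : ‖π x - x‖ ≠ 0 := by
    rw [← dist_eq_norm, dist_comm, (T.proj x hx).2.1]
    exact (T.infDist_pos hxD hx).ne'
  rw [nvec, norm_smul, norm_inv, norm_norm, inv_mul_cancel₀ this]

theorem norm_vN (T : TubeData D ε π u g) {x : Euc d} (hxD : x ∈ D)
    (hx : Metric.infDist x (frontier D) ≤ ε) (v : Euc d) :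
    ‖vN x (π x) v‖ = |⟪v, nvec x (π x)⟫| := by
  rw [vN, norm_smul, T.norm_nvec hxD hx, mul_one, Real.norm_eq_abs]

/-- The distance to `∂D` varies along a curve only through the normal velocity, because
`π ∘ γ` moves tangentially to `∂D`. -/
theorem hasDerivAt_infDist (T : TubeData D ε π u g) (hc : TangentialComparison D ε π)
    {γ : ℝ → Euc d} {a b t : ℝ} (ht : t ∈ Set.Ioo a b) (hγ : ContDiffOn ℝ 1 γ (Set.Icc a b))
    (hN : ∀ t ∈ Set.Icc a b, γ t ∈ D ∧ Metric.infDist (γ t) (frontier D) ≤ ε) :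
    HasDerivAt (fun t => Metric.infDist (γ t) (frontier D))
      (-⟪deriv γ t, nvec (γ t) (π (γ t))⟫) t := by
  have hnhds : Set.Icc a b ∈ 𝓝 t := Icc_mem_nhds ht.1 ht.2
  have htI := Set.Ioo_subset_Icc_self ht
  have hγd : HasDerivAt γ (deriv γ t) t :=
    (((hγ t htI).contDiffAt hnhds).differentiableAt (by norm_num)).hasDerivAt
  set β : ℝ → Euc d := fun t => π (γ t) with hβ
  have hβd : HasDerivAt β (deriv β t) t :=
    (((T.contDiffOn_proj_comp hc hγ hN t htI).contDiffAt hnhds).differentiableAt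
      (by norm_num)).hasDerivAt
  have hp := (T.proj _ (hN t htI).2).1
  have hpos := T.infDist_pos (hN t htI).1 (hN t htI).2
  have hnorm : ∀ τ ∈ Set.Icc a b, Metric.infDist (γ τ) (frontier D) = ‖β τ - γ τ‖ := by
    intro τ hτ
    rw [← (T.proj _ (hN τ hτ).2).2.1, dist_comm, dist_eq_norm]
  have htan : ⟪g (π (γ t)), deriv β t⟫ = 0 := by
    have h1 : HasDerivAt (fun τ => u (β τ)) ⟪g (π (γ t)), deriv β t⟫ t := by
      exact HasFDerivAt.comp_hasDerivAt t (l := u) (T.grad _ hp) hβd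
    have h2 : (fun τ => u (β τ)) =ᶠ[𝓝 t] fun _ => 0 := by
      filter_upwards [hnhds] with τ hτ
      have hpτ := (T.proj _ (hN τ hτ).2).1
      exact ((T.zero_iff _ hpτ).self_of_nhds).1 hpτ
    exact h1.unique ((hasDerivAt_const t (0:ℝ)).congr_of_eventuallyEq h2)
  have htan2 : ⟪β t - γ t, deriv β t⟫ = 0 := by
    have : β t - γ t = param π g (γ t) • g (π (γ t)) := by
      have := T.eq_sub_param (hN t htI).2
      rw [sub_eq_iff_eq_add']
      exact (eq_sub_iff_add_eq.1 this).symm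
    rw [this, inner_smul_left, htan, mul_zero]
  have hne : ‖β t - γ t‖ ≠ 0 := by rw [← hnorm t htI]; exact hpos.ne'
  have hsq := ((hβd.sub hγd).norm_sq).sqrt (pow_ne_zero 2 hne)
  have hev : (fun t => Metric.infDist (γ t) (frontier D)) =ᶠ[𝓝 t]
      fun τ => Real.sqrt (‖β τ - γ τ‖ ^ 2) := by
    filter_upwards [hnhds] with τ hτ
    rw [Real.sqrt_sq (norm_nonneg _), hnorm τ hτ]
  refine (hsq.congr_of_eventuallyEq hev).congr_deriv (Eq.symm ?_)
  change -⟪deriv γ t, ‖β t - γ t‖⁻¹ • (β t - γ t)⟫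
    = 2 * ⟪β t - γ t, deriv β t - deriv γ t⟫ / (2 * Real.sqrt (‖β t - γ t‖ ^ 2))
  rw [Real.sqrt_sq (norm_nonneg _), inner_sub_right, htan2, inner_smul_right,
    real_inner_comm (β t - γ t)]
  field_simp
  ring

/-- The upper tangential comparison at an interior point of a `C¹` piece, obtained by affine
reparametrization of the piece to `[0, 1]`. -/
theorem norm_deriv_proj_le (T : TubeData D ε π u g) (hc : TangentialComparison D ε π)
    {γ : ℝ → Euc d} {a b t : ℝ} (ht : t ∈ Set.Ioo a b) (hγ : ContDiffOn ℝ 1 γ (Set.Icc a b))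
    (hN : ∀ t ∈ Set.Icc a b, γ t ∈ D ∧ Metric.infDist (γ t) (frontier D) ≤ ε) :
    ‖deriv (fun t => π (γ t)) t‖ ≤ 2 * ‖vT (γ t) (π (γ t)) (deriv γ t)‖ := by
  have hab : 0 < b - a := by linarith [ht.1, ht.2]
  have hnhds : Set.Icc a b ∈ 𝓝 t := Icc_mem_nhds ht.1 ht.2
  have htI := Set.Ioo_subset_Icc_self ht
  have hγd : HasDerivAt γ (deriv γ t) t :=
    (((hγ t htI).contDiffAt hnhds).differentiableAt (by norm_num)).hasDerivAt
  have hβd : HasDerivAt (fun t => π (γ t)) (deriv (fun t => π (γ t)) t) t :=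
    (((T.contDiffOn_proj_comp hc hγ hN t htI).contDiffAt hnhds).differentiableAt
      (by norm_num)).hasDerivAt
  set l : ℝ → ℝ := fun s => a + (b - a) * s with hl
  have hmaps : Set.MapsTo l (Set.Icc 0 1) (Set.Icc a b) := by
    intro s hs
    constructor <;> simp only [hl] <;> nlinarith [hs.1, hs.2]
  set s₀ : ℝ := (t - a) / (b - a) with hs₀
  have hs₀I : s₀ ∈ Set.Ioo (0:ℝ) 1 := by
    constructor
    · exact div_pos (by linarith [ht.1]) hab
    · rw [hs₀, div_lt_one hab]; linarith [ht.2]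
  have hls : l s₀ = t := by simp only [hl, hs₀]; field_simp; ring
  have hld : HasDerivAt l (b - a) s₀ := by
    exact (((hasDerivAt_id s₀).const_mul (b - a)).const_add a).congr_deriv (mul_one _)
  have hnhds0 : Set.Icc (0:ℝ) 1 ∈ 𝓝 s₀ := Icc_mem_nhds hs₀I.1 hs₀I.2
  have hmain := (hc (fun s => γ (l s)) (hγ.comp (by fun_prop) hmaps)
    (fun s hs => hN _ (hmaps hs)) s₀ (Set.Ioo_subset_Icc_self hs₀I)).2
  have h1 : HasDerivAt (fun s => γ (l s)) ((b - a) • deriv γ t) s₀ :=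
    HasDerivAt.scomp s₀ (g₁ := γ) (by rw [hls]; exact hγd) hld
  have h2 : HasDerivAt (fun s => π (γ (l s))) ((b - a) • deriv (fun t => π (γ t)) t) s₀ :=
    HasDerivAt.scomp s₀ (g₁ := fun t => π (γ t)) (by rw [hls]; exact hβd) hld
  rw [derivWithin_of_mem_nhds hnhds0, derivWithin_of_mem_nhds hnhds0, h1.deriv, h2.deriv] at hmain
  simp only [hls] at hmain
  have h3 : vT (γ t) (π (γ t)) ((b - a) • deriv γ t)
      = (b - a) • vT (γ t) (π (γ t)) (deriv γ t) := by
    simp only [vT, vN, inner_smul_left, conj_trivial, smul_sub, smul_smul]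
  rw [h3, norm_smul, norm_smul, Real.norm_of_nonneg hab.le] at hmain
  refine le_of_mul_le_mul_left ?_ hab
  linarith

theorem log_hfun_div {x y : Euc d} (hx : 0 < Metric.infDist x (frontier D))
    (hy : 0 < Metric.infDist y (frontier D)) :
    Real.log (hfun D y / hfun D x) =
      Real.log (Metric.infDist y (frontier D)) / 2 - Real.log (Metric.infDist x (frontier D)) / 2 := by
  rw [hfun, hfun, Real.log_div (Real.sqrt_pos.2 hy).ne' (Real.sqrt_pos.2 hx).ne',
    Real.log_sqrt hy.le, Real.log_sqrt hx.le]

/-- Integrating `d/dt (½ log δ) = ± ‖γ̇_N‖ / (2δ)` bounds the normal part of the length from below;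
the tangential part is bounded by means of the competitor `π ∘ γ` in the definition of `bdist`. -/
theorem lower_bound (T : TubeData D ε π u g) (hc : TangentialComparison D ε π)
    {γ : ℝ → Euc d} (hγ : PiecewiseC1On γ 0 1)
    (hN : ∀ t ∈ Set.Icc (0:ℝ) 1, γ t ∈ D ∧ Metric.infDist (γ t) (frontier D) ≤ ε) :
    |Real.log (hfun D (γ 1) / hfun D (γ 0))|
        + bdist D (π (γ 0)) (π (γ 1)) /
            (2 * sSup ((fun t => hfun D (γ t)) '' Set.Icc (0:ℝ) 1))
        ≤ Flen D π γ := by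
  set δ : ℝ → ℝ := fun t => Metric.infDist (γ t) (frontier D) with hδ
  set β : ℝ → Euc d := fun t => π (γ t) with hβ
  set ν : ℝ → Euc d := fun t => nvec (γ t) (π (γ t)) with hν
  have hδpos : ∀ t ∈ Set.Icc (0:ℝ) 1, 0 < δ t := fun t ht => T.infDist_pos (hN t ht).1 (hN t ht).2
  have hδc : ContinuousOn δ (Set.Icc 0 1) :=
    (Metric.continuous_infDist_pt _).comp_continuousOn hγ.1
  have hβc : ContinuousOn β (Set.Icc 0 1) := T.continuousOn_proj_comp hγ.1 hN
  have hνc : ContinuousOn ν (Set.Icc 0 1) := by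
    have h1 : ContinuousOn (fun t => β t - γ t) (Set.Icc 0 1) := hβc.sub hγ.1
    refine (h1.norm.inv₀ fun t ht => ?_).smul h1
    rw [← dist_eq_norm, dist_comm, (T.proj _ (hN t ht).2).2.1]
    exact (hδpos t ht).ne'
  have hβP : PiecewiseC1On β 0 1 := by
    refine ⟨hβc, ?_⟩
    obtain ⟨-, n, t, ht, h0, h1, hC⟩ := hγ
    refine ⟨n, t, ht, h0, h1, fun i => T.contDiffOn_proj_comp hc (hC i) fun τ hτ => hN τ ?_⟩
    refine Set.Icc_subset_Icc ?_ ?_ hτ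
    · rw [← h0]; exact ht (Fin.zero_le _)
    · rw [← h1]; exact ht (Fin.le_last _)
  obtain ⟨S, hS, hpiece⟩ := hγ.exists_piece
  have hfst : ∀ {f : ℝ → ℝ}, ContinuousOn f (Set.Icc 0 1) →
      ContinuousOn (fun z : ℝ × Euc d => f z.1) (Set.Icc 0 1 ×ˢ Set.univ) := fun hf =>
    hf.comp continuousOn_fst fun z hz => hz.1
  have hnuFst : ContinuousOn (fun z : ℝ × Euc d => ν z.1) (Set.Icc 0 1 ×ˢ Set.univ) :=
    hνc.comp continuousOn_fst fun z hz => hz.1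
  have hin : ContinuousOn (fun z : ℝ × Euc d => ⟪z.2, ν z.1⟫) (Set.Icc 0 1 ×ˢ Set.univ) :=
    continuousOn_snd.inner hnuFst
  -- the signed normal speed, which is the derivative of `½ log δ`
  have hI1 : IntervalIntegrable (fun t => -⟪deriv γ t, ν t⟫ / (2 * δ t))
      MeasureTheory.volume 0 1 := by
    refine hγ.intervalIntegrable (Φ := fun t v => -⟪v, ν t⟫ / (2 * δ t)) ?_
    refine hin.neg.div (continuousOn_const.mul (hfst hδc)) fun z hz => ?_
    have := hδpos z.1 hz.1
    positivity
  have hI2 : IntervalIntegrable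
      (fun t => ‖vT (γ t) (π (γ t)) (deriv γ t)‖ / Real.sqrt (δ t))
      MeasureTheory.volume 0 1 := by
    refine hγ.intervalIntegrable
      (Φ := fun t v => ‖v - ⟪v, ν t⟫ • ν t‖ / Real.sqrt (δ t)) ?_
    refine ((continuousOn_snd.sub (hin.smul hnuFst)).norm).div (hfst hδc.sqrt) fun z hz => ?_
    exact (Real.sqrt_pos.2 (hδpos z.1 hz.1)).ne'
  have hI3 : IntervalIntegrable (fun t => ‖deriv β t‖) MeasureTheory.volume 0 1 :=
    hβP.intervalIntegrable (Φ := fun _ v => ‖v‖) continuousOn_snd.norm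
  have hFTC : ∫ t in (0:ℝ)..1, -⟪deriv γ t, ν t⟫ / (2 * δ t)
      = Real.log (δ 1) / 2 - Real.log (δ 0) / 2 := by
    refine MeasureTheory.integral_eq_of_hasDerivAt_off_countable_of_le
      (fun t => Real.log (δ t) / 2) _ zero_le_one hS.countable ?_ ?_ hI1
    · exact (hδc.log fun t ht => (hδpos t ht).ne').div_const 2
    · rintro t ⟨ht, htS⟩
      have htI := Set.Ioo_subset_Icc_self ht
      obtain ⟨a, b, hab, hsub, hC⟩ := hpiece t ⟨htI, htS⟩
      have h := T.hasDerivAt_infDist hc hab hC fun τ hτ => hN τ (hsub hτ)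
      refine ((h.log (hδpos t htI).ne').div_const 2).congr_deriv ?_
      rw [div_div, mul_comm]
  have hpart1 : |Real.log (hfun D (γ 1) / hfun D (γ 0))|
      ≤ ∫ t in (0:ℝ)..1, |-⟪deriv γ t, ν t⟫ / (2 * δ t)| := by
    rw [log_hfun_div (hδpos 0 (by simp)) (hδpos 1 (by simp)), ← hFTC]
    exact intervalIntegral.abs_integral_le_integral_abs zero_le_one
  set M := sSup ((fun t => hfun D (γ t)) '' Set.Icc (0:ℝ) 1) with hM
  have hbdd : BddAbove ((fun t => hfun D (γ t)) '' Set.Icc (0:ℝ) 1) :=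
    (isCompact_Icc.image_of_continuousOn hδc.sqrt).bddAbove
  have hle : ∀ t ∈ Set.Icc (0:ℝ) 1, Real.sqrt (δ t) ≤ M := fun t ht =>
    le_csSup hbdd ⟨t, ht, rfl⟩
  have hMpos : 0 < M := lt_of_lt_of_le (Real.sqrt_pos.2 (hδpos 0 (by simp))) (hle 0 (by simp))
  have hbd : bdist D (π (γ 0)) (π (γ 1)) ≤ ∫ t in (0:ℝ)..1, ‖deriv β t‖ := by
    refine csInf_le ⟨0, ?_⟩ ⟨β, hβP, fun t ht => (T.proj _ (hN t ht).2).1, rfl, rfl, rfl⟩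
    rintro L ⟨α, -, -, -, -, rfl⟩
    exact intervalIntegral.integral_nonneg zero_le_one fun t _ => norm_nonneg _
  have hpart2 : bdist D (π (γ 0)) (π (γ 1)) / (2 * M)
      ≤ ∫ t in (0:ℝ)..1, ‖vT (γ t) (π (γ t)) (deriv γ t)‖ / Real.sqrt (δ t) := by
    rw [div_le_iff₀ (by positivity), ← intervalIntegral.integral_mul_const]
    refine hbd.trans ?_
    refine intervalIntegral.integral_mono_ae_restrict zero_le_one hI3 (hI2.mul_const _) ?_
    have hSae : ∀ᵐ t ∂(MeasureTheory.volume.restrict (Set.Icc (0:ℝ) 1)), t ∉ S :=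
      MeasureTheory.ae_restrict_of_ae (hS.countable.ae_notMem _)
    filter_upwards [hSae, MeasureTheory.ae_restrict_mem measurableSet_Icc] with t htS ht
    obtain ⟨a, b, hab, hsub, hC⟩ := hpiece t ⟨ht, htS⟩
    refine (T.norm_deriv_proj_le hc hab hC fun τ hτ => hN τ (hsub hτ)).trans ?_
    have hsq := Real.sqrt_pos.2 (hδpos t ht)
    rw [div_mul_eq_mul_div, le_div_iff₀ hsq]
    have h1 := hle t ht
    have h2 := norm_nonneg (vT (γ t) (π (γ t)) (deriv γ t))
    nlinarith [mul_le_mul_of_nonneg_left h1 h2]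
  have hF : Flen D π γ = (∫ t in (0:ℝ)..1, |-⟪deriv γ t, ν t⟫ / (2 * δ t)|)
      + ∫ t in (0:ℝ)..1, ‖vT (γ t) (π (γ t)) (deriv γ t)‖ / Real.sqrt (δ t) := by
    rw [← intervalIntegral.integral_add hI1.abs hI2]
    refine intervalIntegral.integral_congr fun t ht => ?_
    rw [Set.uIcc_of_le zero_le_one] at ht
    have := hδpos t ht
    rw [T.norm_vN (hN t ht).1 (hN t ht).2, abs_div, abs_neg, abs_of_pos (by positivity : 0 < 2 * δ t)]
  rw [hF]
  exact add_le_add hpart1 hpart2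

/-- On a normal fiber the curve is `ξ - s(t) ∇u(ξ)` with `s` affine and nonvanishing, so that the
integrand is `|s'| / (2 |s|)`, of constant sign relative to the derivative of `½ log |s|`. -/
theorem fiber_length (T : TubeData D ε π u g) {x y ξ : Euc d}
    (hx : Metric.infDist x (frontier D) ≤ ε) (hy : Metric.infDist y (frontier D) ≤ ε)
    (hseg : ∀ t ∈ Set.Icc (0:ℝ) 1, x + t • (y - x) ∈ D ∧ π (x + t • (y - x)) = ξ) :
    Flen D π (fun t => x + t • (y - x)) = |Real.log (hfun D y / hfun D x)| := by
  obtain ⟨hxD, hπx⟩ : x ∈ D ∧ π x = ξ := by simpa using hseg 0 (by simp)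
  obtain ⟨hyD, hπy⟩ : y ∈ D ∧ π y = ξ := by simpa using hseg 1 (by simp)
  have hξ : ξ ∈ frontier D := hπx ▸ (T.proj x hx).1
  have hε : ∀ t ∈ Set.Icc (0:ℝ) 1, Metric.infDist (x + t • (y - x)) (frontier D) ≤ ε := by
    intro t ht
    refine (Metric.infDist_le_dist_of_mem hξ).trans ?_
    have hxb : x ∈ Metric.closedBall ξ ε := by
      rw [Metric.mem_closedBall, ← hπx, (T.proj x hx).2.1]; exact hx
    have hyb : y ∈ Metric.closedBall ξ ε := by
      rw [Metric.mem_closedBall, ← hπy, (T.proj y hy).2.1]; exact hy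
    exact (convex_closedBall ξ ε).add_smul_sub_mem hxb hyb ht
  have hgn := T.ne_zero ξ hξ
  have hgpos : 0 < ‖g ξ‖ := norm_pos_iff.2 hgn
  set s₀ := param π g x with hs₀
  set s₁ := param π g y with hs₁
  have hxe : x = ξ - s₀ • g ξ := by have := T.eq_sub_param hx; rwa [hπx] at this
  have hye : y = ξ - s₁ • g ξ := by have := T.eq_sub_param hy; rwa [hπy] at this
  set s : ℝ → ℝ := fun t => s₀ + t * (s₁ - s₀) with hs
  have hline : ∀ t : ℝ, x + t • (y - x) = ξ - s t • g ξ := by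
    intro t
    rw [hxe, hye]
    simp only [hs]
    module
  have hδ : ∀ t ∈ Set.Icc (0:ℝ) 1,
      Metric.infDist (x + t • (y - x)) (frontier D) = |s t| * ‖g ξ‖ := by
    intro t ht
    rw [← (T.proj _ (hε t ht)).2.1, (hseg t ht).2, hline t, dist_eq_norm]
    simp [norm_smul]
  have hs0 : ∀ t ∈ Set.Icc (0:ℝ) 1, s t ≠ 0 := by
    intro t ht h
    have := T.infDist_pos (hseg t ht).1 (hε t ht)
    rw [hδ t ht, h] at this
    simp at this
  have hsc : Continuous s := by fun_prop
  have hpos : 0 < s₀ * s₁ := by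
    by_contra hcon
    have h0 : s 0 = s₀ := by simp [hs]
    have h1 : s 1 = s₁ := by simp [hs]
    have hmem : (0:ℝ) ∈ s '' Set.uIcc 0 1 := by
      apply intermediate_value_uIcc hsc.continuousOn
      rw [h0, h1, Set.mem_uIcc]
      rcases mul_nonpos_iff.1 (not_lt.1 hcon) with h | h
      · right; exact ⟨h.2, h.1⟩
      · left; exact h
    obtain ⟨t, ht, ht0⟩ := hmem
    rw [Set.uIcc_of_le zero_le_one] at ht
    exact hs0 t ht ht0
  have hsame : ∀ t ∈ Set.Icc (0:ℝ) 1, 0 < s₀ * s t := by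
    intro t ht
    simp only [hs]
    have h0 : s₀ ≠ 0 := by rintro h; simp [h] at hpos
    have : 0 < s₀ * s₀ := mul_self_pos.2 h0
    rcases eq_or_lt_of_le ht.1 with h | h
    · rw [← h]; simpa using this
    · nlinarith [mul_pos h hpos, mul_nonneg (sub_nonneg.2 ht.2) this.le]
  have hd : ∀ t : ℝ, deriv (fun t : ℝ => x + t • (y - x)) t = (s₀ - s₁) • g ξ := by
    intro t
    have : HasDerivAt (fun t : ℝ => x + t • (y - x)) (y - x) t := by
      simpa using ((hasDerivAt_id t).smul_const (y - x)).const_add x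
    rw [this.deriv, hxe, hye]
    module
  have hderiv : ∀ t ∈ Set.Icc (0:ℝ) 1,
      HasDerivAt (fun t => Real.log (s t) / 2) ((s₁ - s₀) / (2 * s t)) t := by
    intro t ht
    have h1 : HasDerivAt s (s₁ - s₀) t := by
      exact (((hasDerivAt_id t).mul_const (s₁ - s₀)).const_add s₀).congr_deriv (one_mul _)
    refine ((h1.log (hs0 t ht)).div_const 2).congr_deriv ?_
    rw [div_div, mul_comm]
  have hintegral : ∫ t in (0:ℝ)..1, (s₁ - s₀) / (2 * s t) = Real.log s₁ / 2 - Real.log s₀ / 2 := by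
    have := intervalIntegral.integral_eq_sub_of_hasDerivAt (a := (0:ℝ)) (b := 1)
      (f := fun t => Real.log (s t) / 2) (f' := fun t => (s₁ - s₀) / (2 * s t))
      (by rw [Set.uIcc_of_le zero_le_one]; exact hderiv) ?_
    · rw [this]; simp [hs]
    · refine ContinuousOn.intervalIntegrable_of_Icc zero_le_one ?_
      refine continuousOn_const.div (by fun_prop) fun t ht => ?_
      exact mul_ne_zero two_ne_zero (hs0 t ht)
  have hlog : Real.log (hfun D y / hfun D x) = Real.log s₁ / 2 - Real.log s₀ / 2 := by
    rw [log_hfun_div (T.infDist_pos hxD hx) (T.infDist_pos hyD hy)]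
    have h0 := hδ 0 (by simp)
    have h1 := hδ 1 (by simp)
    simp only [zero_smul, one_smul, add_zero, add_sub_cancel, hs, zero_mul, one_mul] at h0 h1
    have hs0' : s₀ ≠ 0 := by rintro h; simp [h] at hpos
    have hs1' : s₁ ≠ 0 := by rintro h; simp [h] at hpos
    rw [h0, h1, Real.log_mul (by simpa) hgpos.ne', Real.log_mul (by simpa) hgpos.ne',
      Real.log_abs, Real.log_abs]
    ring
  have hintegrand : ∀ t ∈ Set.Icc (0:ℝ) 1,
      ‖vN (x + t • (y - x)) (π (x + t • (y - x))) (deriv (fun t : ℝ => x + t • (y - x)) t)‖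
          / (2 * Metric.infDist (x + t • (y - x)) (frontier D))
        + ‖vT (x + t • (y - x)) (π (x + t • (y - x))) (deriv (fun t : ℝ => x + t • (y - x)) t)‖
          / Real.sqrt (Metric.infDist (x + t • (y - x)) (frontier D))
      = |(s₁ - s₀) / (2 * s t)| := by
    intro t ht
    have hst := hs0 t ht
    have hst' : |s t| ≠ 0 := by simpa using hst
    have hvN : vN (x + t • (y - x)) ξ ((s₀ - s₁) • g ξ) = (s₀ - s₁) • g ξ := by
      have hn : nvec (x + t • (y - x)) ξ = ((|s t| * ‖g ξ‖)⁻¹ * s t) • g ξ := by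
        rw [nvec, hline t, sub_sub_cancel, norm_smul, Real.norm_eq_abs, smul_smul]
      rw [vN, hn, inner_smul_left, inner_smul_right, real_inner_self_eq_norm_sq, smul_smul]
      congr 1
      simp only [conj_trivial]
      have : s t ^ 2 = |s t| ^ 2 := (sq_abs _).symm
      field_simp
      rw [this]
    rw [(hseg t ht).2, hd t, vT, hvN, hδ t ht, sub_self, norm_zero, zero_div, add_zero, norm_smul,
      Real.norm_eq_abs, abs_div, abs_mul, abs_two, abs_sub_comm s₀ s₁]
    field_simp
  have hFl : Flen D π (fun t => x + t • (y - x)) = ∫ t in (0:ℝ)..1, |(s₁ - s₀) / (2 * s t)| := by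
    refine intervalIntegral.integral_congr fun t ht => ?_
    rw [Set.uIcc_of_le zero_le_one] at ht
    exact hintegrand t ht
  rw [hFl, hlog, ← hintegral]
  have hs00 : s₀ ≠ 0 := by rintro h; simp [h] at hpos
  have hrw : ∀ t, (s₁ - s₀) / (2 * s t) = (s₀ * (s₁ - s₀)) / (2 * (s₀ * s t)) := by
    intro t
    rw [show 2 * (s₀ * s t) = s₀ * (2 * s t) by ring, mul_div_mul_left _ _ hs00]
  rcases le_total 0 (s₀ * (s₁ - s₀)) with h | h
  · have hnn : ∀ t ∈ Set.Icc (0:ℝ) 1, 0 ≤ (s₁ - s₀) / (2 * s t) := by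
      intro t ht
      rw [hrw t]
      exact div_nonneg h (by linarith [hsame t ht])
    rw [abs_of_nonneg (intervalIntegral.integral_nonneg zero_le_one hnn)]
    refine intervalIntegral.integral_congr fun t ht => ?_
    rw [Set.uIcc_of_le zero_le_one] at ht
    exact abs_of_nonneg (hnn t ht)
  · have hnp : ∀ t ∈ Set.Icc (0:ℝ) 1, (s₁ - s₀) / (2 * s t) ≤ 0 := by
      intro t ht
      rw [hrw t]
      exact div_nonpos_of_nonpos_of_nonneg h (by linarith [hsame t ht])
    have hle : ∫ t in (0:ℝ)..1, (s₁ - s₀) / (2 * s t) ≤ 0 := by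
      have := intervalIntegral.integral_nonneg (f := fun t => -((s₁ - s₀) / (2 * s t)))
        (μ := MeasureTheory.volume) zero_le_one (fun t ht => neg_nonneg.2 (hnp t ht))
      rw [intervalIntegral.integral_neg] at this
      linarith
    rw [abs_of_nonpos hle, ← intervalIntegral.integral_neg]
    refine intervalIntegral.integral_congr fun t ht => ?_
    rw [Set.uIcc_of_le zero_le_one] at ht
    exact abs_of_nonpos (hnp t ht)

end TubeData

/-- Length estimates, with respect to the boundary Finsler metric
`F(x,v) = ‖v_N‖/(2δ_D(x)) + ‖v_T‖/δ_D(x)^{1/2}`, for piecewise `C¹` curves in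
`N = closure(N_ε(∂D)) ∩ D`, where `ε` is small enough that the nearest-point projection
`π` is well defined and the tangential comparison holds. -/
theorem boundary_finsler_length_estimates
    (d : ℕ) (hd : 2 ≤ d) (D : Set (Euc d)) (hD : IsC2BoundedDomain D)
    (ε : ℝ) (hε0 : 0 < ε) (hε1 : ε < 1) (π : Euc d → Euc d)
    (hπ : ∀ x : Euc d, Metric.infDist x (frontier D) ≤ ε →
      π x ∈ frontier D ∧ dist x (π x) = Metric.infDist x (frontier D) ∧
      ∀ q ∈ frontier D, dist x q = Metric.infDist x (frontier D) → q = π x)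
    (hcomp : ∀ γ : ℝ → Euc d, ContDiffOn ℝ 1 γ (Set.Icc 0 1) →
      (∀ t ∈ Set.Icc (0:ℝ) 1, γ t ∈ D ∧ Metric.infDist (γ t) (frontier D) ≤ ε) →
      ∀ t ∈ Set.Icc (0:ℝ) 1,
        (1/2) * ‖vT (γ t) (π (γ t)) (derivWithin γ (Set.Icc 0 1) t)‖ ≤
          ‖derivWithin (fun s => π (γ s)) (Set.Icc 0 1) t‖ ∧
        ‖derivWithin (fun s => π (γ s)) (Set.Icc 0 1) t‖ ≤
          2 * ‖vT (γ t) (π (γ t)) (derivWithin γ (Set.Icc 0 1) t)‖) :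
    (∀ γ : ℝ → Euc d, PiecewiseC1On γ 0 1 →
      (∀ t ∈ Set.Icc (0:ℝ) 1, γ t ∈ D ∧ Metric.infDist (γ t) (frontier D) ≤ ε) →
      |Real.log (hfun D (γ 1) / hfun D (γ 0))|
        + bdist D (π (γ 0)) (π (γ 1)) /
            (2 * sSup ((fun t => hfun D (γ t)) '' Set.Icc (0:ℝ) 1))
        ≤ Flen D π γ) ∧
    (∀ x y : Euc d, x ∈ D → Metric.infDist x (frontier D) ≤ ε →
      y ∈ D → Metric.infDist y (frontier D) ≤ ε →
      ∀ ξ ∈ frontier D,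
        (∀ t ∈ Set.Icc (0:ℝ) 1, x + t • (y - x) ∈ D ∧ π (x + t • (y - x)) = ξ) →
        Flen D π (fun t => x + t • (y - x)) = |Real.log (hfun D y / hfun D x)|) := by
  obtain ⟨u, g, T⟩ := exists_tubeData hD hπ
  refine ⟨fun γ hγ hN => T.lower_bound hcomp hγ hN, ?_⟩
  intro x y _ hx _ hy ξ _ hseg
  exact T.fiber_length hx hy hseg
end
end
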